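/- arXiv:1405.6606 — 2 statements merged into one kernel-verified Lean document; each statement's English description precedes it below -/
import Mathlib

section
/- Let a₁,…,aₙ and b₁,…,bₙ be points in ℝ² with |aᵢ − aⱼ| ≥ |bᵢ − bⱼ| for all i, j. Then the perimeter of the convex hull of {a₁,…,aₙ} is at least the perimeter of the convex hull of {b₁,…,bₙ}. -/
open MeasureTheory Classical

/-- Perimeter of a convex body in the plane: the 1-dimensional Hausdorff measure of the
boundary if the interior is nonempty; twice the 1-dimensional Hausdorff measure of the
(degenerate) set otherwise. -/
noncomputable def planePerimeter (A : Set (EuclideanSpace ℝ (Fin 2))) : ENNReal :=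
  if (interior A).Nonempty then μH[1] (frontier A) else 2 * μH[1] A

abbrev E2 := EuclideanSpace ℝ (Fin 2)

/-- The face of the convex hull of the `a i` in direction `v`. -/
def pface {n : ℕ} (a : Fin n → E2) (v : E2) : Set E2 :=
  {x | x ∈ convexHull ℝ (Set.range a) ∧ ∀ k, inner ℝ (a k) v ≤ inner ℝ x v}

lemma inner2 (x y : E2) : inner ℝ x y = x 0 * y 0 + x 1 * y 1 := by
  simp [PiLp.inner_apply, Fin.sum_univ_two, mul_comm]

/-- Rotation by a right angle. -/
def rotJ (x : E2) : E2 := !₂[- x 1, x 0]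

lemma rotJ_ne {x : E2} (hx : x ≠ 0) : rotJ x ≠ 0 := by
  intro h
  apply hx
  have h0 := congrArg (fun z : E2 => z 0) h
  have h1 := congrArg (fun z : E2 => z 1) h
  simp [rotJ] at h0 h1
  ext i; fin_cases i <;> simp [h0, h1]

lemma inner_rotJ (x : E2) : inner ℝ x (rotJ x) = 0 := by
  rw [inner2]; simp [rotJ]; ring

lemma perp_eq {d v : E2} (hd : d ≠ 0) (h : inner ℝ d v = 0) : ∃ c : ℝ, v = c • rotJ d := by
  have hd' : 0 < d 0 * d 0 + d 1 * d 1 := by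
    rw [← inner2]; exact real_inner_self_pos.2 hd
  rw [inner2] at h
  refine ⟨(- d 1 * v 0 + d 0 * v 1) / (d 0 * d 0 + d 1 * d 1), ?_⟩
  ext i; fin_cases i
  · simp [rotJ]; rw [div_mul_eq_mul_div, ← neg_div, eq_div_iff hd'.ne']; linear_combination (d 0) * h
  · simp [rotJ]; rw [div_mul_eq_mul_div, eq_div_iff hd'.ne']; linear_combination (d 1) * h

lemma perp_parallel {d v w : E2} (hd : d ≠ 0) (hw : w ≠ 0) (h : inner ℝ d v = 0)
    (h' : inner ℝ d w = 0) : ∃ c : ℝ, v = c • w := by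
  obtain ⟨c, hc⟩ := perp_eq hd h
  obtain ⟨e, he⟩ := perp_eq hd h'
  have : e ≠ 0 := by rintro rfl; simp at he; exact hw he
  refine ⟨c / e, ?_⟩
  rw [hc, he, smul_smul, div_mul_cancel₀ _ this]

lemma unit_perp {d v w : E2} (hd : d ≠ 0) (hv : ‖v‖ = 1) (hw : ‖w‖ = 1) (h : inner ℝ d v = 0)
    (h' : inner ℝ d w = 0) : v = w ∨ v = -w := by
  obtain ⟨c, hc⟩ := perp_parallel hd (by rintro rfl; simp at hw) h h'
  have : |c| = 1 := by
    rw [hc, norm_smul, hw] at hv; simpa using hv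
  rcases eq_or_eq_neg_of_abs_eq this with h | h <;> subst h <;> simp [hc]

lemma hull_inner_le {n : ℕ} {a : Fin n → E2} {v : E2} {c : ℝ} (h : ∀ k, inner ℝ (a k) v ≤ c)
    {x : E2} (hx : x ∈ convexHull ℝ (Set.range a)) : inner ℝ x v ≤ c := by
  have : convexHull ℝ (Set.range a) ⊆ {x | inner ℝ v x ≤ c} := by
    refine convexHull_min ?_ (convex_halfSpace_le (innerSL ℝ v).toLinearMap.isLinear c)
    rintro _ ⟨k, rfl⟩
    simpa [real_inner_comm] using h k
  simpa [real_inner_comm] using this hx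

lemma pface_le {n : ℕ} {a : Fin n → E2} {v x y : E2} (hx : x ∈ pface a v)
    (hy : y ∈ convexHull ℝ (Set.range a)) : inner ℝ y v ≤ inner ℝ x v :=
  hull_inner_le hx.2 hy

lemma pface_eq {n : ℕ} {a : Fin n → E2} {v x y : E2} (hx : x ∈ pface a v)
    (hy : y ∈ pface a v) : inner ℝ y v = inner ℝ x v :=
  le_antisymm (pface_le hx hy.1) (pface_le hy hx.1)

lemma exists_two {n : ℕ} {a : Fin n → E2} {x : E2} (hx : x ∈ convexHull ℝ (Set.range a))
    (hx' : x ∉ Set.range a) :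
    ∃ i j, a i ≠ a j ∧ ∀ v, x ∈ pface a v → a i ∈ pface a v ∧ a j ∈ pface a v := by
  have hx0 := hx
  rw [convexHull_range_eq_exists_affineCombination] at hx
  obtain ⟨s, w, hw, hw1, hxs⟩ := hx
  rw [Finset.affineCombination_eq_linear_combination _ _ _ hw1] at hxs
  have key : ∀ v, x ∈ pface a v → ∀ i ∈ s, 0 < w i → a i ∈ pface a v := by
    intro v hv i hi hwi
    have h1 : ∑ i ∈ s, w i * (inner ℝ x v - inner ℝ (a i) v) = 0 := by
      simp only [mul_sub, Finset.sum_sub_distrib, ← Finset.sum_mul, hw1]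
      nth_rewrite 1 [← hxs]
      simp [sum_inner, inner_smul_left]
    have h2 := (Finset.sum_eq_zero_iff_of_nonneg (fun i hi =>
      mul_nonneg (hw i hi) (sub_nonneg.2 (hv.2 i)))).1 h1 i hi
    have h3 : inner ℝ x v = inner ℝ (a i) v := by
      rcases mul_eq_zero.1 h2 with h | h <;> linarith
    refine ⟨subset_convexHull ℝ _ ⟨i, rfl⟩, fun k => ?_⟩
    rw [← h3]; exact hv.2 k
  obtain ⟨i, hi, hwi⟩ : ∃ i ∈ s, 0 < w i := by
    by_contra! hcon
    have := Finset.sum_nonpos hcon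
    linarith
  obtain ⟨j, hj, hwj, hij⟩ : ∃ j ∈ s, 0 < w j ∧ a i ≠ a j := by
    by_contra! hcon
    apply hx'
    refine ⟨i, ?_⟩
    rw [← hxs]
    calc a i = ∑ j ∈ s, w j • a i := by rw [← Finset.sum_smul, hw1, one_smul]
      _ = _ := by
        refine Finset.sum_congr rfl fun j hj => ?_
        rcases (hw j hj).eq_or_lt with h | h
        · simp [← h]
        · rw [hcon j hj h]
  exact ⟨i, j, hij, fun v hv => ⟨key v hv i hi hwi, key v hv j hj hwj⟩⟩

/-- Edge directions. -/
def edgeDirs {n : ℕ} (a : Fin n → E2) : Set E2 :=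
  {v | ‖v‖ = 1 ∧ ∃ i j, a i ≠ a j ∧ a i ∈ pface a v ∧ a j ∈ pface a v}

lemma edgeDirs_finite {n : ℕ} (a : Fin n → E2) : (edgeDirs a).Finite := by
  have : edgeDirs a ⊆ ⋃ i, ⋃ j, {v | ‖v‖ = 1 ∧ a i ≠ a j ∧ inner ℝ (a i - a j) v = 0} := by
    rintro v ⟨hv, i, j, hij, hi, hj⟩
    simp only [Set.mem_iUnion]
    refine ⟨i, j, hv, hij, ?_⟩
    rw [inner_sub_left, pface_eq hi hj, sub_self]
  refine Set.Finite.subset (Set.finite_iUnion fun i => Set.finite_iUnion fun j => ?_) this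
  rcases Set.eq_empty_or_nonempty {v | ‖v‖ = 1 ∧ a i ≠ a j ∧ inner ℝ (a i - a j) v = 0} with h | h
  · rw [h]; exact Set.finite_empty
  · obtain ⟨w, hw, hij, hw'⟩ := h
    refine Set.Finite.subset (Set.toFinite {w, -w}) ?_
    rintro v ⟨hv, -, hv'⟩
    exact unit_perp (sub_ne_zero.2 hij) hv hw hv' hw'

lemma hull_compact {n : ℕ} (a : Fin n → E2) : IsCompact (convexHull ℝ (Set.range a)) :=
  (Set.finite_range a).isCompact_convexHull ℝ

lemma pface_compact {n : ℕ} (a : Fin n → E2) (v : E2) : IsCompact (pface a v) := by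
  refine (hull_compact a).inter_right (t := {x | ∀ k, inner ℝ (a k) v ≤ inner ℝ x v}) ?_
  rw [show {x : E2 | ∀ k, inner ℝ (a k) v ≤ inner ℝ x v} =
    ⋂ k, {x : E2 | inner ℝ (a k) v ≤ inner ℝ x v} by ext; simp]
  exact isClosed_iInter fun k => isClosed_le (by fun_prop) (by fun_prop)

lemma pface_convex {n : ℕ} (a : Fin n → E2) (v : E2) : Convex ℝ (pface a v) := by
  refine (convex_convexHull ℝ _).inter (t := {x | ∀ k, inner ℝ (a k) v ≤ inner ℝ x v}) ?_
  intro x hx y hy s t hs ht hst k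
  simp only [inner_add_left, inner_smul_left, Set.mem_ofPred_eq] at *
  have h1 := mul_le_mul_of_nonneg_left (hx k) hs
  have h2 := mul_le_mul_of_nonneg_left (hy k) ht
  have : inner ℝ (a k) v = s * inner ℝ (a k) v + t * inner ℝ (a k) v := by
    rw [← add_mul, hst, one_mul]
  simp
  linarith

lemma pface_segment {n : ℕ} (a : Fin n → E2) {v : E2} (hv : v ∈ edgeDirs a) :
    ∃ p q, pface a v = segment ℝ p q := by
  obtain ⟨hv1, i, j, hij, hi, hj⟩ := hv
  have hv0 : v ≠ 0 := by rintro rfl; simp at hv1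
  obtain ⟨p, hp, hpm⟩ := (pface_compact a v).exists_isMinOn ⟨_, hi⟩
    (f := fun x => inner ℝ x (rotJ v)) (by fun_prop)
  obtain ⟨q, hq, hqm⟩ := (pface_compact a v).exists_isMaxOn ⟨_, hi⟩
    (f := fun x => inner ℝ x (rotJ v)) (by fun_prop)
  refine ⟨p, q, Set.Subset.antisymm ?_ ((pface_convex a v).segment_subset hp hq)⟩
  intro x hx
  have par : ∀ y ∈ pface a v, ∃ c : ℝ, y = p + c • rotJ v := by
    intro y hy
    obtain ⟨c, hc⟩ := perp_eq (v := y - p) hv0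
      (by rw [real_inner_comm, inner_sub_left, pface_eq hp hy, sub_self])
    exact ⟨c, by rw [← hc]; abel⟩
  have hN : 0 < inner ℝ (rotJ v) (rotJ v) := real_inner_self_pos.2 (rotJ_ne hv0)
  obtain ⟨c, rfl⟩ := par x hx
  obtain ⟨e, rfl⟩ := par q hq
  have h1 := hpm hx
  have h2 := hqm hx
  simp only [inner_add_left, inner_smul_left, Set.mem_ofPred_eq] at h1 h2
  have hc : 0 ≤ c := by
    simp at h1
    rw [← real_inner_self_eq_norm_sq] at h1
    by_contra! hh; nlinarith
  have hce : c ≤ e := by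
    simp at h2
    rw [← real_inner_self_eq_norm_sq] at h2
    exact le_of_mul_le_mul_right h2 hN
  rw [segment_eq_image']
  rcases hc.eq_or_lt with rfl | hc'
  · exact ⟨0, by simp, by simp⟩
  · have he : 0 < e := hc'.trans_le hce
    refine ⟨c / e, ⟨by positivity, (div_le_one he).2 hce⟩, ?_⟩
    simp [smul_smul, he.ne']

lemma finite_null (s : Set E2) (hs : s.Finite) : μH[1] s = 0 := by
  have := Measure.nullSingletonClass_hausdorff E2 (d := 1) one_pos
  exact hs.measure_zero _


lemma support_up {n : ℕ} {a : Fin n → E2} {g w : E2} {t : ℝ} (hg : g ≠ 0) (hw : w ≠ 0)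
    (hgw : inner ℝ g w = 0) (i j : Fin n) (hi : inner ℝ (a i) g < t) (hj : t < inner ℝ (a j) g) :
    ∃ v x, ‖v‖ = 1 ∧ 0 < inner ℝ v w ∧ x ∈ pface a v ∧ inner ℝ x g = t := by
  set K := convexHull ℝ (Set.range a) with hK
  have haK : ∀ k, a k ∈ K := fun k => subset_convexHull ℝ _ ⟨k, rfl⟩
  have hS : IsCompact (K ∩ {x | inner ℝ x g = t}) :=
    (hull_compact a).inter_right (isClosed_eq (by fun_prop) (by fun_prop))
  have hne : (K ∩ {x | inner ℝ x g = t}).Nonempty := by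
    have hpos : 0 < inner ℝ (a j) g - inner ℝ (a i) g := by linarith
    set s := (t - inner ℝ (a i) g) / (inner ℝ (a j) g - inner ℝ (a i) g) with hs
    have hs0 : 0 ≤ s := div_nonneg (by linarith) hpos.le
    have hs1 : s ≤ 1 := (div_le_one hpos).2 (by linarith)
    refine ⟨(1 - s) • a i + s • a j, (convex_convexHull ℝ _) (haK i) (haK j) (by linarith) hs0
      (by ring), ?_⟩
    have : s * (inner ℝ (a j) g - inner ℝ (a i) g) = t - inner ℝ (a i) g :=
      div_mul_cancel₀ _ hpos.ne'
    simp only [Set.mem_ofPred_eq, inner_add_left, real_inner_smul_left]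
    linarith
  obtain ⟨x, ⟨hxK, hxt⟩, hxm⟩ := hS.exists_isMaxOn hne (f := fun x => inner ℝ x w) (by fun_prop)
  have hww : 0 < inner ℝ w w := real_inner_self_pos.2 hw
  have hsep : ∀ m : ℕ, ∃ v : E2, ‖v‖ = 1 ∧
      ∀ y ∈ K, inner ℝ y v < inner ℝ (x + (1 / ((m : ℝ) + 1)) • w) v := by
    intro m
    have hε : (0 : ℝ) < 1 / ((m : ℝ) + 1) := Nat.one_div_pos_of_nat
    set ε := 1 / ((m : ℝ) + 1)
    have hnot : x + ε • w ∉ K := by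
      intro hmem
      have h1 := hxm (a := x + ε • w) ⟨hmem, by
        simp only [Set.mem_ofPred_eq, inner_add_left, real_inner_smul_left]
        rw [real_inner_comm g w, hgw, mul_zero, add_zero]; exact hxt⟩
      simp only [Set.mem_ofPred_eq, inner_add_left, real_inner_smul_left] at h1
      nlinarith
    obtain ⟨f, u, hf1, hf2⟩ := geometric_hahn_banach_closed_point (convex_convexHull ℝ _)
      (hull_compact a).isClosed hnot
    set v := (InnerProductSpace.toDual ℝ E2).symm f with hv
    have hfv : ∀ y, f y = inner ℝ y v := by
      intro y; rw [real_inner_comm, hv, InnerProductSpace.toDual_symm_apply]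
    have hv0 : v ≠ 0 := by
      intro h0
      have h1 := hf1 x hxK
      rw [hfv, h0] at h1 hf2
      simp at h1 hf2
      linarith
    have hnv : 0 < ‖v‖ := norm_pos_iff.2 hv0
    refine ⟨‖v‖⁻¹ • v, by rw [norm_smul, norm_inv, norm_norm, inv_mul_cancel₀ hnv.ne'], ?_⟩
    intro y hy
    rw [real_inner_smul_right, real_inner_smul_right, ← hfv, ← hfv]
    exact mul_lt_mul_of_pos_left ((hf1 y hy).trans hf2) (inv_pos.2 hnv)
  choose V hV1 hV2 using hsep
  obtain ⟨v, hv, φ, hφ, hlim⟩ := (isCompact_sphere (0 : E2) 1).tendsto_subseq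
    (x := V) (fun m => by simp [hV1 m])
  have hv1 : ‖v‖ = 1 := by simpa using hv
  have heps : Filter.Tendsto (fun m : ℕ => x + (1 / ((φ m : ℝ) + 1)) • w) Filter.atTop (nhds x) := by
    have h1 := (tendsto_one_div_add_atTop_nhds_zero_nat (𝕜 := ℝ)).comp hφ.tendsto_atTop
    have h2 := (h1.smul_const w).const_add x
    simpa using h2
  have hsup : ∀ y ∈ K, inner ℝ y v ≤ inner ℝ x v := by
    intro y hy
    exact le_of_tendsto_of_tendsto ((tendsto_const_nhds (x := y)).inner hlim) (heps.inner hlim)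
      (Filter.Eventually.of_forall fun m => (hV2 (φ m) y hy).le)
  have hpos : 0 ≤ inner ℝ v w := by
    refine ge_of_tendsto (hlim.inner (tendsto_const_nhds (x := w)))
      (Filter.Eventually.of_forall fun m => ?_)
    have h1 := hV2 (φ m) x hxK
    have hε : (0 : ℝ) < 1 / ((φ m : ℝ) + 1) := Nat.one_div_pos_of_nat
    rw [inner_add_left, real_inner_smul_left] at h1
    simp only [Function.comp]
    rw [real_inner_comm]
    by_contra! hh
    nlinarith
  refine ⟨v, x, hv1, ?_, ⟨hxK, fun k => hsup _ (haK k)⟩, hxt⟩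
  rcases hpos.eq_or_lt with h0 | h0
  · exfalso
    obtain ⟨c, hc⟩ := perp_parallel (v := v) (w := g) hw hg (by rw [real_inner_comm]; exact h0.symm)
      (by rw [real_inner_comm]; exact hgw)
    have h1 := hsup _ (haK i)
    have h2 := hsup _ (haK j)
    have hxt' : inner ℝ x g = t := hxt
    rw [hc, real_inner_smul_right, real_inner_smul_right, hxt'] at h1 h2
    have hc0 : c ≠ 0 := by rintro rfl; simp [hc] at hv1
    rcases lt_or_gt_of_ne hc0 with h | h <;> nlinarith
  · exact h0

lemma slice_up {n : ℕ} {a : Fin n → E2} {g w : E2} {t : ℝ} (hg : g ≠ 0) (hw : w ≠ 0)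
    (hgw : inner ℝ g w = 0) (i j : Fin n) (hi : inner ℝ (a i) g < t) (hj : t < inner ℝ (a j) g)
    (ht : ∀ k, inner ℝ (a k) g ≠ t) :
    ∃! v, v ∈ edgeDirs a ∧ 0 < inner ℝ v w ∧ ∃ x ∈ pface a v, inner ℝ x g = t := by
  have hnr : ∀ x, inner ℝ x g = t → x ∉ Set.range a := by
    rintro x hx ⟨k, rfl⟩; exact ht k hx
  obtain ⟨v, x, hv1, hvw, hx, hxt⟩ := support_up hg hw hgw i j hi hj
  refine ⟨v, ⟨⟨hv1, ?_⟩, hvw, x, hx, hxt⟩, ?_⟩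
  · obtain ⟨k, l, hkl, H⟩ := exists_two hx.1 (hnr x hxt)
    exact ⟨k, l, hkl, H v hx⟩
  · rintro v' ⟨⟨hv1', -⟩, hvw', x', hx', hxt'⟩
    have hxx : x' = x := by
      obtain ⟨c, hc⟩ := perp_parallel (d := g) (v := x' - x) hg hw
        (by rw [real_inner_comm, inner_sub_left, hxt, hxt', sub_self]) hgw
      have h1 := pface_le hx hx'.1
      have h2 := pface_le hx' hx.1
      have hx'e : x' = x + c • w := by rw [← hc]; abel
      rw [hx'e, inner_add_left, real_inner_smul_left] at h1
      rw [hx'e, inner_add_left, real_inner_smul_left] at h2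
      rw [real_inner_comm v w] at h1
      rw [real_inner_comm v' w] at h2
      have c1 : c ≤ 0 := by by_contra! hh; nlinarith
      have c2 : 0 ≤ c := by by_contra! hh; nlinarith
      have : c = 0 := le_antisymm c1 c2
      rw [hx'e, this]; simp
    subst hxx
    obtain ⟨k, l, hkl, H⟩ := exists_two hx.1 (hnr _ hxt)
    have h1 := H v hx
    have h2 := H v' hx'
    rcases unit_perp (sub_ne_zero.2 hkl) hv1' hv1
      (by rw [inner_sub_left, pface_eq h2.1 h2.2, sub_self])
      (by rw [inner_sub_left, pface_eq h1.1 h1.2, sub_self]) with h | h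
    · exact h
    · exfalso
      rw [h, inner_neg_left] at hvw'
      linarith

lemma slice_count {n : ℕ} {a : Fin n → E2} {g : E2} {t : ℝ} (hg : g ≠ 0)
    (i j : Fin n) (hi : inner ℝ (a i) g < t) (hj : t < inner ℝ (a j) g)
    (ht : ∀ k, inner ℝ (a k) g ≠ t) :
    ((edgeDirs_finite a).toFinset.filter fun v => ∃ x ∈ pface a v, inner ℝ x g = t).card = 2 := by
  have hw := rotJ_ne hg
  have hgw := inner_rotJ g
  obtain ⟨v, ⟨hv, hvw, hvx⟩, hvu⟩ := slice_up hg hw hgw i j hi hj ht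
  obtain ⟨v', ⟨hv', hvw', hvx'⟩, hvu'⟩ := slice_up (w := - rotJ g) hg (neg_ne_zero.2 hw)
    (by rw [inner_neg_right, hgw, neg_zero]) i j hi hj ht
  rw [Finset.card_eq_two]
  refine ⟨v, v', ?_, ?_⟩
  · rintro rfl
    rw [inner_neg_right] at hvw'; linarith
  · ext u
    simp only [Finset.mem_filter, Set.Finite.mem_toFinset, Finset.mem_insert,
      Finset.mem_singleton]
    constructor
    · rintro ⟨hu, x, hx, hxt⟩
      rcases lt_trichotomy (inner ℝ u (rotJ g)) 0 with h | h | h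
      · right; exact hvu' u ⟨hu, by rw [inner_neg_right]; linarith, x, hx, hxt⟩
      · exfalso
        obtain ⟨c, hc⟩ := perp_parallel (v := u) (w := g) hw hg (by rw [real_inner_comm]; exact h)
          (by rw [real_inner_comm]; exact hgw)
        have h1 := hx.2 i
        have h2 := hx.2 j
        rw [hc, real_inner_smul_right, real_inner_smul_right, hxt] at h1 h2
        have hc0 : c ≠ 0 := by rintro rfl; have := hu.1; simp [hc] at this
        rcases lt_or_gt_of_ne hc0 with h | h <;> nlinarith
      · left; exact hvu u ⟨hu, h, x, hx, hxt⟩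
    · rintro (rfl | rfl)
      · exact ⟨hv, hvx⟩
      · exact ⟨hv', hvx'⟩

/-- support function -/
noncomputable def hsupp {n : ℕ} (a : Fin n → E2) (g : E2) : ℝ := ⨆ i, inner ℝ (a i) g

lemma width_eq {n : ℕ} [NeZero n] {a : Fin n → E2} {p q : E2 → E2}
    (hpq : ∀ v ∈ edgeDirs a, pface a v = segment ℝ (p v) (q v)) (g : E2) :
    ∑ v ∈ (edgeDirs_finite a).toFinset, |inner ℝ (q v - p v) g| =
      2 * (hsupp a g + hsupp a (-g)) := by
  have hle : ∀ g i, inner ℝ (a i) g ≤ hsupp a g := fun g i =>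
    le_ciSup (f := fun i => inner ℝ (a i) g) (Set.finite_range _).bddAbove i
  have hex : ∀ g, ∃ i, inner ℝ (a i) g = hsupp a g := fun g =>
    exists_eq_ciSup_of_finite (f := fun i => inner ℝ (a i) g)
  rcases eq_or_ne g 0 with rfl | hg
  · simp [hsupp]
  obtain ⟨j, hj⟩ := hex g
  obtain ⟨i, hi⟩ := hex (-g)
  have hi' : inner ℝ (a i) g = - hsupp a (-g) := by rw [← hi]; simp
  have hge : ∀ k, - hsupp a (-g) ≤ inner ℝ (a k) g := by
    intro k; have := hle (-g) k; rw [inner_neg_right] at this; linarith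
  have hnn : 0 ≤ hsupp a g + hsupp a (-g) := by have := hge j; linarith
  have hvol : ∀ v ∈ (edgeDirs_finite a).toFinset,
      ENNReal.ofReal |inner ℝ (q v - p v) g| = volume ((fun x => inner ℝ x g) '' pface a v) := by
    intro v hv
    rw [hpq v (by simpa using hv)]
    have : (fun x : E2 => inner ℝ x g) '' segment ℝ (p v) (q v) =
        Set.uIcc (inner ℝ (p v) g) (inner ℝ (q v) g) := by
      rw [← segment_eq_uIcc]
      have := image_segment ℝ (innerSL ℝ g).toLinearMap.toAffineMap (p v) (q v)
      simpa [real_inner_comm] using this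
    rw [this, Real.volume_interval, inner_sub_left]
  have hmeas : ∀ v, MeasurableSet ((fun x => inner ℝ x g) '' pface a v) := fun v =>
    ((pface_compact a v).image (by fun_prop)).measurableSet
  have hsum : ∑ v ∈ (edgeDirs_finite a).toFinset, ENNReal.ofReal |inner ℝ (q v - p v) g| =
      ENNReal.ofReal (2 * (hsupp a g + hsupp a (-g))) := by
    rw [Finset.sum_congr rfl hvol]
    have h1 : ∀ v, volume ((fun x => inner ℝ x g) '' pface a v) =
        ∫⁻ t, ((fun x => inner ℝ x g) '' pface a v).indicator 1 t := fun v =>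
      (lintegral_indicator_one (hmeas v)).symm
    simp only [h1]
    rw [← lintegral_finsetSum _ (fun v _ => measurable_one.indicator (hmeas v))]
    have h2 : (fun t => ∑ v ∈ (edgeDirs_finite a).toFinset,
          ((fun x => inner ℝ x g) '' pface a v).indicator (1 : ℝ → ENNReal) t) =ᵐ[volume]
        fun t => 2 * (Set.Ioo (- hsupp a (-g)) (hsupp a g)).indicator 1 t := by
      have hfin : (Set.range fun k => inner ℝ (a k) g).Finite := Set.finite_range _
      filter_upwards [hfin.measure_zero volume |> measure_eq_zero_iff_ae_notMem.1] with t ht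
      have ht' : ∀ k, inner ℝ (a k) g ≠ t := fun k hk => ht ⟨k, hk⟩
      have h3 : ∑ v ∈ (edgeDirs_finite a).toFinset,
          ((fun x => inner ℝ x g) '' pface a v).indicator (1 : ℝ → ENNReal) t =
          (((edgeDirs_finite a).toFinset.filter
            fun v => ∃ x ∈ pface a v, inner ℝ x g = t).card : ENNReal) := by
        rw [Finset.card_filter, Nat.cast_sum]
        refine Finset.sum_congr rfl fun v _ => ?_
        simp [Set.indicator_apply]
      rw [h3]
      by_cases htt : t ∈ Set.Ioo (- hsupp a (-g)) (hsupp a g)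
      · rw [slice_count hg i j (by rw [hi']; exact htt.1) (by rw [hj]; exact htt.2) ht']
        simp [Set.indicator_of_mem htt]
      · rw [Set.indicator_of_notMem htt, mul_zero, Nat.cast_eq_zero, Finset.card_eq_zero,
          Finset.filter_eq_empty_iff]
        rintro v - ⟨x, hx, hxt⟩
        apply htt
        have u1 : inner ℝ x g ≤ hsupp a g := hull_inner_le (hle g) hx.1
        have u2 : inner ℝ x (-g) ≤ hsupp a (-g) := hull_inner_le (hle (-g)) hx.1
        rw [inner_neg_right] at u2
        rw [hxt] at u1 u2
        refine ⟨lt_of_le_of_ne (by linarith) ?_, lt_of_le_of_ne u1 ?_⟩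
        · rw [← hi']; exact ht' i
        · rw [← hj]; exact (ht' j).symm
    rw [lintegral_congr_ae h2, lintegral_const_mul _ (measurable_one.indicator measurableSet_Ioo),
      lintegral_indicator_one measurableSet_Ioo, Real.volume_Ioo, ENNReal.ofReal_mul (by norm_num)]
    simp
  rw [← ENNReal.ofReal_sum_of_nonneg (fun _ _ => abs_nonneg _)] at hsum
  exact (ENNReal.ofReal_eq_ofReal_iff (Finset.sum_nonneg fun _ _ => abs_nonneg _)
    (by positivity)).1 hsum

lemma exists_support {n : ℕ} {a : Fin n → E2} {x : E2} (hint : (interior (convexHull ℝ (Set.range a))).Nonempty)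
    (hx : x ∈ convexHull ℝ (Set.range a))
    (hx' : x ∉ interior (convexHull ℝ (Set.range a))) : ∃ v, ‖v‖ = 1 ∧ x ∈ pface a v := by
  have hconv := convex_convexHull ℝ (Set.range a)
  obtain ⟨f, hf⟩ := geometric_hahn_banach_open_point hconv.interior isOpen_interior hx'
  set v := (InnerProductSpace.toDual ℝ E2).symm f with hv
  have hfv : ∀ y, f y = inner ℝ y v := by
    intro y; rw [real_inner_comm, hv, InnerProductSpace.toDual_symm_apply]
  have hv0 : v ≠ 0 := by
    intro h0
    obtain ⟨y, hy⟩ := hint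
    have h1 := hf y hy
    rw [hfv, hfv, h0] at h1
    simp at h1
  have hnv : 0 < ‖v‖ := norm_pos_iff.2 hv0
  refine ⟨‖v‖⁻¹ • v, by rw [norm_smul, norm_inv, norm_norm, inv_mul_cancel₀ hnv.ne'], hx, ?_⟩
  intro k
  rw [real_inner_smul_right, real_inner_smul_right, ← hfv, ← hfv]
  refine mul_le_mul_of_nonneg_left ?_ (inv_pos.2 hnv).le
  have hcl : a k ∈ closure (interior (convexHull ℝ (Set.range a))) := by
    rw [hconv.closure_interior_eq_closure_of_nonempty_interior hint]
    exact subset_closure (subset_convexHull ℝ _ ⟨k, rfl⟩)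
  exact closure_minimal (fun y hy => (hf y hy).le)
    (isClosed_le f.continuous continuous_const) hcl

lemma inner_const_no_interior {n : ℕ} {a : Fin n → E2} {v : E2} (hv : v ≠ 0) {c : ℝ}
    (h : ∀ y ∈ convexHull ℝ (Set.range a), inner ℝ y v = c) :
    ¬ (interior (convexHull ℝ (Set.range a))).Nonempty := by
  rintro ⟨x, hx⟩
  have h1 : ∀ᶠ s : ℝ in nhds 0, x + s • v ∈ interior (convexHull ℝ (Set.range a)) := by
    have : ContinuousAt (fun s : ℝ => x + s • v) 0 := by fun_prop
    exact this.eventually_mem (by simpa using isOpen_interior.mem_nhds hx)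
  have h2 : ∀ᶠ s : ℝ in nhdsWithin 0 {0}ᶜ, x + s • v ∈ interior (convexHull ℝ (Set.range a)) :=
    h1.filter_mono nhdsWithin_le_nhds
  obtain ⟨s, hs, hs0⟩ := (h2.and self_mem_nhdsWithin).exists
  have e1 := h _ (interior_subset hs)
  have e2 := h _ (interior_subset hx)
  rw [inner_add_left, real_inner_smul_left, e2] at e1
  have : s * inner ℝ v v = 0 := by linarith
  rcases mul_eq_zero.1 this with h | h
  · exact hs0 h
  · exact hv (inner_self_eq_zero.1 h)

lemma pface_sub_frontier {n : ℕ} {a : Fin n → E2} {v x : E2} (hv : v ≠ 0) (hx : x ∈ pface a v) :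
    x ∉ interior (convexHull ℝ (Set.range a)) := by
  intro hi
  have h1 : ∀ᶠ s : ℝ in nhds 0, x + s • v ∈ interior (convexHull ℝ (Set.range a)) := by
    have : ContinuousAt (fun s : ℝ => x + s • v) 0 := by fun_prop
    exact this.eventually_mem (by simpa using isOpen_interior.mem_nhds hi)
  have h2 : ∀ᶠ s : ℝ in nhdsWithin 0 (Set.Ioi 0), x + s • v ∈ interior (convexHull ℝ (Set.range a)) :=
    h1.filter_mono nhdsWithin_le_nhds
  obtain ⟨s, hs, hs0⟩ := (h2.and self_mem_nhdsWithin).exists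
  have e1 := pface_le hx (interior_subset hs)
  rw [inner_add_left, real_inner_smul_left] at e1
  have := real_inner_self_pos.2 hv
  have hs0' : 0 < s := hs0
  nlinarith

lemma perimeter_eq {n : ℕ} (a : Fin n → E2) :
    planePerimeter (convexHull ℝ (Set.range a)) =
      ∑ v ∈ (edgeDirs_finite a).toFinset, μH[1] (pface a v) := by
  have hclosed : IsClosed (convexHull ℝ (Set.range a)) := (hull_compact a).isClosed
  have hmem : ∀ k, a k ∈ convexHull ℝ (Set.range a) := fun k => subset_convexHull ℝ _ ⟨k, rfl⟩
  unfold planePerimeter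
  split_ifs with hint
  · rw [← measure_biUnion_finset₀]
    · apply le_antisymm
      · have hsub : frontier (convexHull ℝ (Set.range a)) ⊆
            (⋃ v ∈ (edgeDirs_finite a).toFinset, pface a v) ∪ Set.range a := by
          intro x hx
          rw [hclosed.frontier_eq] at hx
          by_cases hxa : x ∈ Set.range a
          · exact Or.inr hxa
          · left
            obtain ⟨v, hv, hxv⟩ := exists_support hint hx.1 hx.2
            obtain ⟨k, l, hkl, H⟩ := exists_two hx.1 hxa
            simp only [Set.mem_iUnion, Set.Finite.mem_toFinset]
            exact ⟨v, ⟨hv, k, l, hkl, H v hxv⟩, hxv⟩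
        refine (measure_mono hsub).trans ((measure_union_le _ _).trans ?_)
        rw [finite_null _ (Set.finite_range a), add_zero]
      · apply measure_mono
        intro x hx
        simp only [Set.mem_iUnion, Set.Finite.mem_toFinset] at hx
        obtain ⟨v, hv, hxv⟩ := hx
        rw [hclosed.frontier_eq]
        refine ⟨hxv.1, pface_sub_frontier ?_ hxv⟩
        rintro rfl
        have := hv.1
        simp at this
    · intro v hv w hw hvw
      simp only [Set.Finite.coe_toFinset] at hv hw
      have hsub : (pface a v ∩ pface a w).Subsingleton := by
        rintro x ⟨hxv, hxw⟩ y ⟨hyv, hyw⟩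
        by_contra hxy
        rcases unit_perp (sub_ne_zero.2 hxy) hv.1 hw.1
          (by rw [inner_sub_left, pface_eq hxv hyv, sub_self])
          (by rw [inner_sub_left, pface_eq hxw hyw, sub_self]) with h | h
        · exact hvw h
        · refine inner_const_no_interior (v := w) (c := inner ℝ x w) ?_ ?_ hint
          · rintro rfl
            have := hw.1
            simp at this
          · intro y hy
            have h1 := pface_le hxv hy
            have h2 := pface_le hxw hy
            rw [h, inner_neg_right, inner_neg_right] at h1
            linarith
      exact finite_null _ hsub.finite
    · intro v _
      exact (pface_compact a v).measurableSet.nullMeasurableSet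
  · have hspan : affineSpan ℝ (Set.range a) ≠ ⊤ := fun h =>
      hint (interior_convexHull_nonempty_iff_affineSpan_eq_top.2 h)
    by_cases hconst : ∀ i j, a i = a j
    · have hU : edgeDirs a = ∅ := by
        ext v; simp only [Set.mem_empty_iff_false, iff_false]
        rintro ⟨-, i, j, hij, -⟩
        exact hij (hconst i j)
      have hs : (convexHull ℝ (Set.range a)) = Set.range a := by
        have : (Set.range a).Subsingleton := by
          rintro _ ⟨i, rfl⟩ _ ⟨j, rfl⟩; exact hconst i j
        rcases this.eq_empty_or_singleton with h | ⟨x, h⟩ <;> rw [h] <;> simp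
      rw [hs, finite_null _ (Set.finite_range a)]
      simp [hU]
    · push Not at hconst
      obtain ⟨i, j, hij⟩ := hconst
      have hdir : vectorSpan ℝ (Set.range a) ≠ ⊤ := by
        intro h
        apply hspan
        rw [AffineSubspace.affineSpan_eq_top_iff_vectorSpan_eq_top_of_nonempty ℝ E2 E2 (Set.range_nonempty_iff_nonempty.2 ⟨i⟩)]
        exact h
      obtain ⟨w, hw, hw0⟩ : ∃ w ∈ (vectorSpan ℝ (Set.range a))ᗮ, w ≠ 0 := by
        by_contra! hcon
        apply hdir
        rw [← Submodule.orthogonal_eq_bot_iff]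
        rw [Submodule.eq_bot_iff]
        exact hcon
      have hnw : 0 < ‖w‖ := norm_pos_iff.2 hw0
      obtain ⟨v, hv1, hvc⟩ : ∃ v : E2, ‖v‖ = 1 ∧ ∀ k l, inner ℝ (a k) v = inner ℝ (a l) v := by
        refine ⟨‖w‖⁻¹ • w, by rw [norm_smul, norm_inv, norm_norm, inv_mul_cancel₀ hnw.ne'], ?_⟩
        intro k l
        have h1 := (Submodule.mem_orthogonal _ _).1 hw _
          (vsub_mem_vectorSpan ℝ (Set.mem_range_self k) (Set.mem_range_self l))
        rw [vsub_eq_sub, inner_sub_left] at h1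
        rw [real_inner_smul_right, real_inner_smul_right]
        rw [sub_eq_zero.1 h1]
      have hK : ∀ y ∈ convexHull ℝ (Set.range a), inner ℝ y v = inner ℝ (a i) v := by
        intro y hy
        apply le_antisymm
        · exact hull_inner_le (fun k => (hvc k i).le) hy
        · have := hull_inner_le (v := -v) (c := - inner ℝ (a i) v)
            (fun k => by rw [inner_neg_right, hvc k i]) hy
          rw [inner_neg_right] at this; linarith
      have hF1 : pface a v = convexHull ℝ (Set.range a) := by
        ext y
        exact ⟨fun h => h.1, fun h => ⟨h, fun k => by rw [hK y h, hvc k i]⟩⟩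
      have hF2 : pface a (-v) = convexHull ℝ (Set.range a) := by
        ext y
        refine ⟨fun h => h.1, fun h => ⟨h, fun k => ?_⟩⟩
        rw [inner_neg_right, inner_neg_right, hK y h, hvc k i]
      have hU : (edgeDirs_finite a).toFinset = {v, -v} := by
        ext u
        simp only [Set.Finite.mem_toFinset, Finset.mem_insert, Finset.mem_singleton]
        constructor
        · rintro ⟨hu1, k, l, hkl, hk, hl⟩
          exact unit_perp (sub_ne_zero.2 hkl) hu1 hv1
            (by rw [inner_sub_left, pface_eq hk hl, sub_self])
            (by rw [inner_sub_left, hvc k l, sub_self])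
        · rintro (rfl | rfl)
          · exact ⟨hv1, i, j, hij, by rw [hF1]; exact hmem i, by rw [hF1]; exact hmem j⟩
          · exact ⟨by rw [norm_neg, hv1], i, j, hij, by rw [hF2]; exact hmem i,
              by rw [hF2]; exact hmem j⟩
      have hne : v ≠ -v := by
        intro h
        have h2 : (2 : ℝ) • v = 0 := by
          rw [two_smul]; nth_rewrite 2 [h]; simp
        have : v = 0 := by simpa using h2
        rw [this] at hv1; simp at hv1
      rw [hU, Finset.sum_pair hne, hF1, hF2, two_mul]

/-- The summary of the geometric part. -/
lemma geom_summary {n : ℕ} [NeZero n] (a : Fin n → E2) :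
    ∃ (s : Finset E2) (d : E2 → E2),
      planePerimeter (convexHull ℝ (Set.range a)) = ENNReal.ofReal (∑ v ∈ s, ‖d v‖) ∧
      ∀ g, ∑ v ∈ s, |inner ℝ (d v) g| = 2 * (hsupp a g + hsupp a (-g)) := by
  have : ∀ v, ∃ pq : E2 × E2, v ∈ edgeDirs a → pface a v = segment ℝ pq.1 pq.2 := by
    intro v
    by_cases hv : v ∈ edgeDirs a
    · obtain ⟨p, q, h⟩ := pface_segment a hv
      exact ⟨(p, q), fun _ => h⟩
    · exact ⟨(0, 0), fun h => absurd h hv⟩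
  choose pq hpq using this
  refine ⟨(edgeDirs_finite a).toFinset, fun v => (pq v).2 - (pq v).1, ?_, fun g =>
    width_eq (p := fun v => (pq v).1) (q := fun v => (pq v).2) hpq g⟩
  rw [perimeter_eq, ENNReal.ofReal_sum_of_nonneg (fun _ _ => norm_nonneg _)]
  refine Finset.sum_congr rfl fun v hv => ?_
  rw [hpq v (by simpa using hv), hausdorffMeasure_segment, edist_comm, edist_dist, dist_eq_norm]


abbrev W4 := EuclideanSpace ℝ (Fin 4)

/-- Unnormalised Gaussian density. -/
noncomputable def rho (x : W4) : ℝ := Real.exp (-(1 / 2) * ‖x‖ ^ 2)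

lemma rho_pos (x : W4) : 0 < rho x := Real.exp_pos _

lemma rho_cont : Continuous rho := by unfold rho; fun_prop

lemma int_gauss {b : ℝ} (hb : 0 < b) : Integrable (fun x : W4 => Real.exp (-b * ‖x‖ ^ 2)) := by
  have h := (GaussianFourier.integrable_cexp_neg_mul_sq_norm_add (V := W4) (b := (b : ℂ))
    (by simpa using hb) 0 0).norm
  refine h.congr (Filter.Eventually.of_forall fun x => ?_)
  simp only [Complex.norm_exp]
  congr 1
  simp [← Complex.ofReal_pow]

lemma int_rho {f : W4 → ℝ} (hf : Continuous f) (C : ℝ) (hC : ∀ x, |f x| ≤ C * (1 + ‖x‖)) :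
    Integrable (fun x => f x * rho x) := by
  have hC0 : 0 ≤ C := by
    have := hC 0; simp at this; exact (abs_nonneg _).trans this
  refine ((int_gauss (b := 1 / 4) (by norm_num)).const_mul (C * 3)).mono'
    (hf.mul rho_cont).aestronglyMeasurable (Filter.Eventually.of_forall fun x => ?_)
  rw [norm_mul, Real.norm_eq_abs, Real.norm_of_nonneg (rho_pos x).le]
  have h1 : (1 + ‖x‖) ≤ 3 * Real.exp (1 / 4 * ‖x‖ ^ 2) := by
    have := Real.add_one_le_exp (1 / 4 * ‖x‖ ^ 2)
    nlinarith [sq_nonneg (‖x‖ - 1)]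
  have h2 : rho x = Real.exp (-(1 / 4) * ‖x‖ ^ 2) * Real.exp (-(1 / 4) * ‖x‖ ^ 2) := by
    rw [rho, ← Real.exp_add]; ring_nf
  have h3 : Real.exp (1 / 4 * ‖x‖ ^ 2) * Real.exp (-(1 / 4) * ‖x‖ ^ 2) = 1 := by
    rw [← Real.exp_add]; simp
  have hp : 0 < Real.exp (-(1 / 4) * ‖x‖ ^ 2) := Real.exp_pos _
  calc |f x| * rho x ≤ (C * (1 + ‖x‖)) * rho x := by gcongr; exact (rho_pos x).le; exact hC x
    _ ≤ (C * (3 * Real.exp (1 / 4 * ‖x‖ ^ 2))) * rho x := by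
        gcongr; exact (rho_pos x).le
    _ = C * 3 * Real.exp (-(1 / 4) * ‖x‖ ^ 2) *
        (Real.exp (1 / 4 * ‖x‖ ^ 2) * Real.exp (-(1 / 4) * ‖x‖ ^ 2)) := by rw [h2]; ring
    _ = _ := by rw [h3, mul_one]

lemma rho_hasFDerivAt (x : W4) : HasFDerivAt rho (-(rho x) • innerSL ℝ x) x := by
  have h1 : HasFDerivAt (fun x : W4 => ‖x‖ ^ 2) (2 • innerSL ℝ x) x :=
    (hasStrictFDerivAt_norm_sq x).hasFDerivAt
  have h2 := (h1.const_mul (-(1 / 2))).exp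
  convert! h2 using 1
  ext y
  simp [rho]

lemma gauss_ibp {f : W4 → ℝ} {f' : W4 → W4 →L[ℝ] ℝ} (v : W4) (hf : ∀ x, HasFDerivAt f (f' x) x)
    (hf'c : Continuous fun x => f' x v) (C : ℝ) (hC : ∀ x, |f x| ≤ C) (hC' : ∀ x, |f' x v| ≤ C) :
    ∫ x, f x * inner ℝ x v * rho x = ∫ x, f' x v * rho x := by
  have hfc : Continuous f := continuous_iff_continuousAt.2 fun x => (hf x).continuousAt
  have hC0 : 0 ≤ C := (abs_nonneg _).trans (hC 0)
  have e1 : ∀ x, fderiv ℝ f x v = f' x v := fun x => by rw [(hf x).fderiv]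
  have e2 : ∀ x, fderiv ℝ rho x v = - (inner ℝ x v * rho x) := fun x => by
    rw [(rho_hasFDerivAt x).fderiv]; simp; ring
  have hle : ∀ x : W4, C ≤ C * (1 + ‖x‖) := fun x =>
    le_mul_of_one_le_right hC0 (by linarith [norm_nonneg x])
  have i1 : Integrable (fun x => f' x v * rho x) :=
    int_rho hf'c C fun x => (hC' x).trans (hle x)
  have i2 : Integrable (fun x => f x * rho x) :=
    int_rho hfc C fun x => (hC x).trans (hle x)
  have i3 : Integrable (fun x => f x * inner ℝ x v * rho x) := by
    refine int_rho (by fun_prop) (C * ‖v‖) fun x => ?_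
    rw [abs_mul]
    calc |f x| * |inner ℝ x v| ≤ C * (‖x‖ * ‖v‖) := by
          gcongr; exact hC x; exact abs_real_inner_le_norm x v
      _ ≤ _ := by nlinarith [mul_nonneg hC0 (norm_nonneg v)]
  have := integral_mul_fderiv_eq_neg_fderiv_mul_of_integrable (μ := (volume : Measure W4))
    (f := f) (g := rho) (v := v)
    (by simpa only [e1] using i1)
    (by
      simp only [e2]
      refine i3.neg.congr (Filter.Eventually.of_forall fun x => ?_)
      simp; ring)
    i2 (fun x _ => (hf x).differentiableAt) (fun x _ => (rho_hasFDerivAt x).differentiableAt)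
  simp only [e1, e2] at this
  rw [← neg_inj, ← this, ← integral_neg]
  congr 1; ext x; ring

/-- partition function -/
noncomputable def pS {n : ℕ} (c : Fin n → W4) (x : W4) : ℝ := ∑ i, Real.exp (inner ℝ x (c i))

/-- soft maximum weights -/
noncomputable def pW {n : ℕ} (c : Fin n → W4) (i : Fin n) (x : W4) : ℝ :=
  Real.exp (inner ℝ x (c i)) / pS c x

section
variable {n : ℕ} [NeZero n]

lemma pS_pos (c : Fin n → W4) (x : W4) : 0 < pS c x :=
  Finset.sum_pos (fun _ _ => Real.exp_pos _) Finset.univ_nonempty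

lemma pS_cont (c : Fin n → W4) : Continuous (pS c) := by unfold pS; fun_prop

lemma pW_cont (c : Fin n → W4) (i : Fin n) : Continuous (pW c i) := by
  unfold pW
  exact Continuous.div (by fun_prop) (pS_cont c) fun x => (pS_pos c x).ne'

lemma pW_nonneg (c : Fin n → W4) (i : Fin n) (x : W4) : 0 ≤ pW c i x :=
  div_nonneg (Real.exp_pos _).le (pS_pos c x).le

lemma pW_sum (c : Fin n → W4) (x : W4) : ∑ i, pW c i x = 1 := by
  unfold pW
  rw [← Finset.sum_div]
  exact div_self (pS_pos c x).ne'

lemma pW_le_one (c : Fin n → W4) (i : Fin n) (x : W4) : pW c i x ≤ 1 := by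
  rw [← pW_sum c x]
  exact Finset.single_le_sum (f := fun i => pW c i x) (fun j _ => pW_nonneg c j x)
    (Finset.mem_univ i)

lemma pW_fderiv (c : Fin n → W4) (i : Fin n) (x : W4) :
    HasFDerivAt (pW c i) (pW c i x • (innerSL ℝ (c i) - ∑ j, pW c j x • innerSL ℝ (c j))) x := by
  have h1 : ∀ j, HasFDerivAt (fun x : W4 => Real.exp (inner ℝ x (c j)))
      (Real.exp (inner ℝ x (c j)) • innerSL ℝ (c j)) x := by
    intro j
    have : HasFDerivAt (fun x : W4 => inner ℝ x (c j)) (innerSL ℝ (c j)) x := by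
      have := (innerSL ℝ (c j)).hasFDerivAt (x := x)
      refine this.congr_of_eventuallyEq (Filter.Eventually.of_forall fun y => ?_)
      simp [real_inner_comm]
    exact this.exp
  have h2 : HasFDerivAt (pS c) (∑ j, Real.exp (inner ℝ x (c j)) • innerSL ℝ (c j)) x :=
    HasFDerivAt.fun_sum fun j _ => h1 j
  have h3 := (h1 i).mul ((hasDerivAt_inv (pS_pos c x).ne').comp_hasFDerivAt x h2)
  have h5 : pW c i = fun x => Real.exp (inner ℝ x (c i)) * (pS c x)⁻¹ := by
    ext y; rw [pW, div_eq_mul_inv]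
  have h6 : pW c i x = Real.exp (inner ℝ x (c i)) * (pS c x)⁻¹ := by rw [h5]
  rw [h6, h5]
  refine HasFDerivAt.congr_fderiv h3 ?_
  have hS := (pS_pos c x).ne'
  have h4 : ∑ j, pW c j x • innerSL ℝ (c j) =
      (pS c x)⁻¹ • ∑ j, Real.exp (inner ℝ x (c j)) • innerSL ℝ (c j) := by
    rw [Finset.smul_sum]
    refine Finset.sum_congr rfl fun j _ => ?_
    rw [smul_smul, pW]; congr 1; ring
  rw [h4]
  generalize (∑ j, Real.exp (inner ℝ x (c j)) • innerSL ℝ (c j)) = L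
  ext y
  simp
  field_simp
  ring

lemma sym_sum (p : Fin n → ℝ) (hp : ∑ i, p i = 1) (c c' : Fin n → W4) :
    ∑ i, p i * (inner ℝ (c i) (c' i) - ∑ j, p j * inner ℝ (c j) (c' i)) =
      1 / 2 * ∑ i, ∑ j, p i * p j * inner ℝ (c i - c j) (c' i - c' j) := by
  have e : ∀ i j, p i * p j * inner ℝ (c i - c j) (c' i - c' j) =
      p i * inner ℝ (c i) (c' i) * p j + p j * inner ℝ (c j) (c' j) * p i
      - p i * (p j * inner ℝ (c j) (c' i)) - p j * (p i * inner ℝ (c i) (c' j)) := by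
    intro i j
    simp only [inner_sub_left, inner_sub_right]; ring
  simp only [e, Finset.sum_sub_distrib, Finset.sum_add_distrib, mul_sub]
  have s1 : ∑ i, ∑ j, p i * inner ℝ (c i) (c' i) * p j = ∑ i, p i * inner ℝ (c i) (c' i) := by
    simp only [← Finset.mul_sum, hp, mul_one]
  have s2 : ∑ i, ∑ j, p j * inner ℝ (c j) (c' j) * p i = ∑ i, p i * inner ℝ (c i) (c' i) := by
    rw [Finset.sum_comm]; exact s1
  have s3 : ∑ i, ∑ j, p j * (p i * inner ℝ (c i) (c' j)) =
      ∑ i, ∑ j, p i * (p j * inner ℝ (c j) (c' i)) := Finset.sum_comm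
  have s4 : ∑ i, p i * ∑ j, p j * inner ℝ (c j) (c' i) =
      ∑ i, ∑ j, p i * (p j * inner ℝ (c j) (c' i)) := by simp only [Finset.mul_sum]
  rw [s1, s2, s3, s4]
  ring

lemma deriv_integral_nonpos (c c' : Fin n → W4)
    (h : ∀ i j, inner ℝ (c i - c j) (c' i - c' j) ≤ 0) :
    ∫ x, (∑ i, pW c i x * inner ℝ x (c' i)) * rho x ≤ 0 := by
  have hint : ∀ i, Integrable fun x => pW c i x * inner ℝ x (c' i) * rho x := by
    intro i
    refine int_rho ((pW_cont c i).mul (by fun_prop)) (‖c' i‖) fun x => ?_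
    rw [abs_mul, abs_of_nonneg (pW_nonneg c i x)]
    calc pW c i x * |inner ℝ x (c' i)| ≤ 1 * (‖x‖ * ‖c' i‖) := by
          gcongr; exact pW_le_one c i x; exact abs_real_inner_le_norm _ _
      _ ≤ _ := by nlinarith [norm_nonneg (c' i)]
  have hcont : ∀ i, Continuous fun x =>
      pW c i x * (inner ℝ (c i) (c' i) - ∑ j, pW c j x * inner ℝ (c j) (c' i)) := by
    intro i
    refine (pW_cont c i).mul (continuous_const.sub ?_)
    exact continuous_finsetSum _ fun j _ => (pW_cont c j).mul continuous_const
  have hbd : ∀ i x, |pW c i x * (inner ℝ (c i) (c' i) - ∑ j, pW c j x * inner ℝ (c j) (c' i))| ≤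
      |inner ℝ (c i) (c' i)| + ∑ j, |inner ℝ (c j) (c' i)| := by
    intro i x
    rw [abs_mul, abs_of_nonneg (pW_nonneg c i x)]
    refine (mul_le_of_le_one_left (abs_nonneg _) (pW_le_one c i x)).trans ?_
    refine (abs_sub _ _).trans (add_le_add le_rfl ?_)
    refine (Finset.abs_sum_le_sum_abs _ _).trans (Finset.sum_le_sum fun j _ => ?_)
    rw [abs_mul, abs_of_nonneg (pW_nonneg c j x)]
    exact mul_le_of_le_one_left (abs_nonneg _) (pW_le_one c j x)
  have hibp : ∀ i, ∫ x, pW c i x * inner ℝ x (c' i) * rho x =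
      ∫ x, (pW c i x * (inner ℝ (c i) (c' i) - ∑ j, pW c j x * inner ℝ (c j) (c' i))) * rho x := by
    intro i
    have e : ∀ x, (pW c i x • (innerSL ℝ (c i) - ∑ j, pW c j x • innerSL ℝ (c j)) : W4 →L[ℝ] ℝ) (c' i)
        = pW c i x * (inner ℝ (c i) (c' i) - ∑ j, pW c j x * inner ℝ (c j) (c' i)) := by
      intro x
      simp
    have := gauss_ibp (c' i) (pW_fderiv c i) (by simp only [e]; exact hcont i)
      (1 + (|inner ℝ (c i) (c' i)| + ∑ j, |inner ℝ (c j) (c' i)|))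
      (fun x => by
        rw [abs_of_nonneg (pW_nonneg c i x)]
        have := pW_le_one c i x
        have : 0 ≤ |inner ℝ (c i) (c' i)| + ∑ j, |inner ℝ (c j) (c' i)| := by positivity
        linarith)
      (fun x => by
        rw [e]; have := hbd i x; linarith)
    rw [this]; simp only [e]
  have hint2 : ∀ i, Integrable fun x =>
      (pW c i x * (inner ℝ (c i) (c' i) - ∑ j, pW c j x * inner ℝ (c j) (c' i))) * rho x := by
    intro i
    refine int_rho (hcont i) _ fun x => (hbd i x).trans (le_mul_of_one_le_right (by positivity) ?_)
    linarith [norm_nonneg x]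
  simp only [Finset.sum_mul]
  rw [integral_finsetSum _ fun i _ => hint i, Finset.sum_congr rfl fun i _ => hibp i,
    ← integral_finsetSum _ fun i _ => hint2 i]
  refine integral_nonpos fun x => ?_
  simp only [← Finset.sum_mul]
  rw [sym_sum _ (pW_sum c x)]
  refine mul_nonpos_of_nonpos_of_nonneg ?_ (rho_pos x).le
  refine mul_nonpos_of_nonneg_of_nonpos (by norm_num) ?_
  refine Finset.sum_nonpos fun i _ => Finset.sum_nonpos fun j _ => ?_
  exact mul_nonpos_of_nonneg_of_nonpos (mul_nonneg (pW_nonneg c i x) (pW_nonneg c j x)) (h i j)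

lemma log_pS_cont (c : Fin n → W4) : Continuous fun x => Real.log (pS c x) :=
  (pS_cont c).log fun x => (pS_pos c x).ne'

lemma sup_le_log (c : Fin n → W4) (x : W4) : ⨆ i, inner ℝ x (c i) ≤ Real.log (pS c x) := by
  refine ciSup_le fun i => ?_
  rw [Real.le_log_iff_exp_le (pS_pos c x)]
  exact Finset.single_le_sum (f := fun i => Real.exp (inner ℝ x (c i)))
    (fun j _ => (Real.exp_pos _).le) (Finset.mem_univ i)

lemma log_le_sup (c : Fin n → W4) (x : W4) :
    Real.log (pS c x) ≤ (⨆ i, inner ℝ x (c i)) + Real.log n := by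
  have hn : (0 : ℝ) < n := by exact_mod_cast Nat.pos_of_ne_zero (NeZero.ne n)
  rw [Real.log_le_iff_le_exp (pS_pos c x), Real.exp_add, Real.exp_log hn]
  calc pS c x ≤ ∑ i : Fin n, Real.exp (⨆ i, inner ℝ x (c i)) := by
        refine Finset.sum_le_sum fun i _ => Real.exp_le_exp.2 ?_
        exact le_ciSup (f := fun i => inner ℝ x (c i)) (Set.finite_range _).bddAbove i
    _ = _ := by simp [mul_comm]

lemma sup_abs (c : Fin n → W4) (x : W4) : |⨆ i, inner ℝ x (c i)| ≤ (∑ i, ‖c i‖) * ‖x‖ := by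
  obtain ⟨i, hi⟩ := exists_eq_ciSup_of_finite (f := fun i => inner ℝ x (c i))
  rw [← hi]
  refine (abs_real_inner_le_norm _ _).trans ?_
  rw [mul_comm]
  gcongr
  exact Finset.single_le_sum (f := fun i => ‖c i‖) (fun j _ => norm_nonneg _) (Finset.mem_univ i)

lemma sup_cont (c : Fin n → W4) : Continuous fun x => ⨆ i, inner ℝ x (c i) := by
  have : (fun x => ⨆ i, inner ℝ x (c i)) =
      fun x => Finset.univ.sup' Finset.univ_nonempty fun i => inner ℝ x (c i) := by
    ext x; rw [Finset.sup'_univ_eq_ciSup]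
  rw [this]
  exact Continuous.finset_sup'_apply _ fun i _ => by fun_prop

lemma sup_int (c : Fin n → W4) : Integrable fun x => (⨆ i, inner ℝ x (c i)) * rho x := by
  refine int_rho (sup_cont c) (∑ i, ‖c i‖) fun x => (sup_abs c x).trans ?_
  gcongr
  linarith

lemma log_int (c : Fin n → W4) : Integrable fun x => Real.log (pS c x) * rho x := by
  have hn : (1 : ℝ) ≤ n := by exact_mod_cast Nat.pos_of_ne_zero (NeZero.ne n)
  have hl := Real.log_nonneg hn
  refine int_rho (log_pS_cont c) ((∑ i, ‖c i‖) + Real.log n) fun x => ?_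
  have h1 := sup_le_log c x
  have h2 := log_le_sup c x
  have h3 := abs_le.1 (sup_abs c x)
  have h4 : 0 ≤ ∑ i, ‖c i‖ := by positivity
  have h5 := norm_nonneg x
  have h6 := mul_nonneg hl h5
  rw [abs_le]
  constructor <;> nlinarith

lemma log_compare (A B : Fin n → W4) (horth : ∀ i j, inner ℝ (A i) (B j) = 0)
    (hd : ∀ i j, ‖B i - B j‖ ≤ ‖A i - A j‖) :
    ∫ x, Real.log (pS B x) * rho x ≤ ∫ x, Real.log (pS A x) * rho x := by
  set c : ℝ → Fin n → W4 := fun θ i => Real.cos θ • A i + Real.sin θ • B i with hc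
  set c' : ℝ → Fin n → W4 := fun θ i => (-Real.sin θ) • A i + Real.cos θ • B i with hc'
  set φ : ℝ → ℝ := fun θ => ∫ x, Real.log (pS (c θ) x) * rho x with hφ
  have hder : ∀ θ, HasDerivAt φ (∫ x, (∑ i, pW (c θ) i x * inner ℝ x (c' θ i)) * rho x) θ := by
    intro θ
    have hpt : ∀ x θ, HasDerivAt (fun θ => Real.log (pS (c θ) x) * rho x)
        ((∑ i, pW (c θ) i x * inner ℝ x (c' θ i)) * rho x) θ := by
      intro x θ
      have h1 : ∀ i, HasDerivAt (fun θ => Real.exp (inner ℝ x (c θ i)))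
          (Real.exp (inner ℝ x (c θ i)) * inner ℝ x (c' θ i)) θ := by
        intro i
        have : HasDerivAt (fun θ => inner ℝ x (c θ i)) (inner ℝ x (c' θ i)) θ := by
          simp only [hc, hc', inner_add_right, real_inner_smul_right]
          exact ((Real.hasDerivAt_cos θ).mul_const _).add ((Real.hasDerivAt_sin θ).mul_const _)
        exact this.exp
      have h2 : HasDerivAt (fun θ => pS (c θ) x)
          (∑ i, Real.exp (inner ℝ x (c θ i)) * inner ℝ x (c' θ i)) θ :=
        HasDerivAt.fun_sum fun i _ => h1 i
      have h3 := (h2.log (pS_pos (c θ) x).ne').mul_const (rho x)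
      convert! h3 using 2
      rw [Finset.sum_div]
      refine Finset.sum_congr rfl fun i _ => ?_
      rw [pW]; ring
    have hcn : ∀ θ i, ‖c' θ i‖ ≤ ‖A i‖ + ‖B i‖ := by
      intro θ i
      refine (norm_add_le _ _).trans (add_le_add ?_ ?_)
      · rw [norm_smul]
        refine mul_le_of_le_one_left (norm_nonneg _) ?_
        rw [norm_neg]; exact Real.abs_sin_le_one θ
      · rw [norm_smul]
        exact mul_le_of_le_one_left (norm_nonneg _) (Real.abs_cos_le_one θ)
    have hb : Integrable fun x : W4 => ((∑ i, (‖A i‖ + ‖B i‖)) * ‖x‖) * rho x := by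
      refine int_rho (by fun_prop) (∑ i, (‖A i‖ + ‖B i‖)) fun x => ?_
      rw [abs_of_nonneg (by positivity)]
      gcongr; linarith
    have key := hasDerivAt_integral_of_dominated_loc_of_deriv_le (μ := (volume : Measure W4))
      (F := fun θ x => Real.log (pS (c θ) x) * rho x)
      (F' := fun θ x => (∑ i, pW (c θ) i x * inner ℝ x (c' θ i)) * rho x)
      (x₀ := θ) (s := Set.univ) (bound := fun x => ((∑ i, (‖A i‖ + ‖B i‖)) * ‖x‖) * rho x)
      Filter.univ_mem
      (Filter.Eventually.of_forall fun θ => (log_int (c θ)).aestronglyMeasurable)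
      (log_int (c θ))
      (by
        refine Continuous.aestronglyMeasurable ?_
        refine Continuous.mul (continuous_finsetSum _ fun i _ => ?_) rho_cont
        exact (pW_cont _ i).mul (by fun_prop))
      (Filter.Eventually.of_forall fun x θ _ => by
        rw [norm_mul, Real.norm_of_nonneg (rho_pos x).le]
        refine mul_le_mul_of_nonneg_right ?_ (rho_pos x).le
        refine (norm_sum_le _ _).trans ?_
        rw [Finset.sum_mul]
        refine Finset.sum_le_sum fun i _ => ?_
        rw [norm_mul, Real.norm_of_nonneg (pW_nonneg _ i x)]
        refine (mul_le_of_le_one_left (norm_nonneg _) (pW_le_one _ i x)).trans ?_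
        refine (abs_real_inner_le_norm _ _).trans ?_
        rw [mul_comm]
        gcongr; exact hcn θ i)
      hb
      (Filter.Eventually.of_forall fun x θ _ => hpt x θ)
    exact key.2
  have hanti : AntitoneOn φ (Set.Icc 0 (Real.pi / 2)) := by
    refine antitoneOn_of_deriv_nonpos (convex_Icc _ _)
      (fun θ _ => (hder θ).continuousAt.continuousWithinAt)
      (fun θ _ => (hder θ).differentiableAt.differentiableWithinAt) ?_
    intro θ hθ
    rw [interior_Icc] at hθ
    rw [(hder θ).deriv]
    apply deriv_integral_nonpos
    intro i j
    have hs : 0 ≤ Real.sin θ := Real.sin_nonneg_of_nonneg_of_le_pi hθ.1.le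
      (by linarith [hθ.2, Real.pi_pos])
    have hcs : 0 ≤ Real.cos θ := Real.cos_nonneg_of_neg_pi_div_two_le_of_le
      (by linarith [hθ.1, Real.pi_pos]) hθ.2.le
    have e1 : c θ i - c θ j = Real.cos θ • (A i - A j) + Real.sin θ • (B i - B j) := by
      simp only [hc, smul_sub]; abel
    have e2 : c' θ i - c' θ j = (-Real.sin θ) • (A i - A j) + Real.cos θ • (B i - B j) := by
      simp only [hc', smul_sub]; abel
    have o : inner ℝ (A i - A j) (B i - B j) = 0 := by
      simp [inner_sub_left, inner_sub_right, horth]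
    have o' : inner ℝ (B i - B j) (A i - A j) = 0 := by rw [real_inner_comm]; exact o
    rw [e1, e2]
    simp only [inner_add_left, inner_add_right, real_inner_smul_left, real_inner_smul_right, o, o',
      real_inner_self_eq_norm_sq]
    have hsq : ‖B i - B j‖ ^ 2 ≤ ‖A i - A j‖ ^ 2 := by
      gcongr; exact hd i j
    nlinarith [mul_nonneg hs hcs]
  have h := hanti (a := 0) (b := Real.pi / 2) ⟨le_rfl, by positivity⟩ ⟨by positivity, le_rfl⟩
    (by positivity)
  have h0 : c 0 = A := by ext1 i; simp [hc]
  have h1 : c (Real.pi / 2) = B := by ext1 i; simp [hc]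
  simp only [hφ, h0, h1] at h
  exact h

lemma sup_compare (A B : Fin n → W4) (horth : ∀ i j, inner ℝ (A i) (B j) = 0)
    (hd : ∀ i j, ‖B i - B j‖ ≤ ‖A i - A j‖) :
    ∫ x, (⨆ i, inner ℝ x (B i)) * rho x ≤ ∫ x, (⨆ i, inner ℝ x (A i)) * rho x := by
  have hrho : Integrable rho := int_gauss (b := 1 / 2) (by norm_num)
  have hscale : ∀ s : ℝ, 0 < s → ∀ (C : Fin n → W4) x,
      ⨆ i, inner ℝ x (s • C i) = s * ⨆ i, inner ℝ x (C i) := by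
    intro s hs C x
    simp only [real_inner_smul_right]
    rw [Real.mul_iSup_of_nonneg hs.le]
  have key : ∀ s : ℝ, 0 < s → s * ∫ x, (⨆ i, inner ℝ x (B i)) * rho x ≤
      s * (∫ x, (⨆ i, inner ℝ x (A i)) * rho x) + Real.log n * ∫ x, rho x := by
    intro s hs
    have h1 := log_compare (fun i => s • A i) (fun i => s • B i)
      (fun i j => by simp [inner_smul_left, inner_smul_right, horth])
      (fun i j => by
        rw [← smul_sub, ← smul_sub, norm_smul, norm_smul]
        gcongr; exact hd i j)
    have h2 : s * ∫ x, (⨆ i, inner ℝ x (B i)) * rho x ≤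
        ∫ x, Real.log (pS (fun i => s • B i) x) * rho x := by
      rw [← integral_const_mul]
      refine integral_mono ((sup_int B).const_mul s) (log_int _) fun x => ?_
      simp only
      rw [← mul_assoc, ← hscale s hs]
      exact mul_le_mul_of_nonneg_right (sup_le_log _ x) (rho_pos x).le
    have h3 : ∫ x, Real.log (pS (fun i => s • A i) x) * rho x ≤
        s * (∫ x, (⨆ i, inner ℝ x (A i)) * rho x) + Real.log n * ∫ x, rho x := by
      rw [← integral_const_mul, ← integral_const_mul,
        ← integral_add ((sup_int A).const_mul s) (hrho.const_mul _)]
      refine integral_mono (log_int _) (((sup_int A).const_mul s).add (hrho.const_mul _))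
        fun x => ?_
      simp only [Pi.add_apply]
      rw [← mul_assoc, ← hscale s hs, ← add_mul]
      exact mul_le_mul_of_nonneg_right (log_le_sup _ x) (rho_pos x).le
    linarith
  by_contra! hcon
  set a := ∫ x, (⨆ i, inner ℝ x (B i)) * rho x
  set b := ∫ x, (⨆ i, inner ℝ x (A i)) * rho x
  set r := Real.log n * ∫ x, rho x
  have hab : 0 < a - b := by linarith
  have hk := key ((|r| + 1) / (a - b)) (by positivity)
  have : (|r| + 1) / (a - b) * (a - b) = |r| + 1 := div_mul_cancel₀ _ hab.ne'
  have := le_abs_self r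
  nlinarith

end

lemma abs_int (w : W4) : Integrable fun x => |inner ℝ w x| * rho x := by
  refine int_rho (by fun_prop) ‖w‖ fun x => ?_
  rw [abs_abs]
  refine (abs_real_inner_le_norm _ _).trans ?_
  gcongr; linarith

lemma abs_rot {w u : W4} (h : ‖w‖ = ‖u‖) :
    ∫ x, |inner ℝ w x| * rho x = ∫ x, |inner ℝ u x| * rho x := by
  set R := (Submodule.span ℝ {w - u})ᗮ.reflection
  have hR : R w = u := Submodule.reflection_sub h
  rw [← R.measurePreserving.integral_comp R.toHomeomorph.measurableEmbedding
    (fun x => |inner ℝ u x| * rho x)]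
  congr 1; ext x
  rw [← hR, R.inner_map_map]
  simp [rho]

lemma exists_kappa : ∃ κ : ℝ, 0 < κ ∧ ∀ w : W4, ∫ x, |inner ℝ w x| * rho x = κ * ‖w‖ := by
  set e : W4 := EuclideanSpace.single 0 1 with he
  have hen : ‖e‖ = 1 := by simp [he]
  refine ⟨∫ x, |inner ℝ e x| * rho x, ?_, fun w => ?_⟩
  · refine integral_pos_of_integrable_nonneg_nonzero (x := e)
      (Continuous.mul (by fun_prop) rho_cont) (abs_int e)
      (fun x => mul_nonneg (abs_nonneg _) (rho_pos x).le) ?_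
    rw [real_inner_self_eq_norm_sq, hen]
    simpa using (rho_pos e).ne'
  · rw [abs_rot (w := w) (u := ‖w‖ • e) (by simp [norm_smul, hen]), mul_comm, ← integral_const_mul]
    congr 1; ext x
    rw [real_inner_smul_left, abs_mul, abs_of_nonneg (norm_nonneg w)]; ring

lemma per_integral {n : ℕ} [NeZero n] (a : Fin n → E2) (ι : E2 → W4) (pr : W4 → E2)
    (hadj : ∀ x y, inner ℝ (ι x) y = inner ℝ x (pr y)) (hnorm : ∀ x, ‖ι x‖ = ‖x‖)
    (hneg : ∀ y, pr (-y) = - pr y) {κ : ℝ}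
    (hκ : ∀ w : W4, ∫ x, |inner ℝ w x| * rho x = κ * ‖w‖) :
    ∃ P : ℝ, planePerimeter (convexHull ℝ (Set.range a)) = ENNReal.ofReal P ∧
      κ * P = 4 * ∫ x, (⨆ i, inner ℝ x (ι (a i))) * rho x := by
  obtain ⟨s, d, h1, h2⟩ := geom_summary a
  refine ⟨_, h1, ?_⟩
  have hsup : ∀ x, ⨆ i, inner ℝ x (ι (a i)) = hsupp a (pr x) := by
    intro x
    simp only [hsupp, ← hadj]
    congr 1; ext i; rw [real_inner_comm]
  have hrn : ∀ x, rho (-x) = rho x := fun x => by simp [rho]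
  have hflip : ∫ x, (⨆ i, inner ℝ (-x) (ι (a i))) * rho x =
      ∫ x, (⨆ i, inner ℝ x (ι (a i))) * rho x := by
    rw [← integral_neg_eq_self (fun x => (⨆ i, inner ℝ x (ι (a i))) * rho x)]
    simp only [hrn]
  have hint := sup_int (fun i => ι (a i))
  have hint' : Integrable fun x => (⨆ i, inner ℝ (-x) (ι (a i))) * rho x := by
    have := hint.comp_neg
    simpa only [hrn] using this
  calc κ * ∑ v ∈ s, ‖d v‖ = ∑ v ∈ s, ∫ x, |inner ℝ (ι (d v)) x| * rho x := by
        rw [Finset.mul_sum]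
        exact Finset.sum_congr rfl fun v _ => by rw [hκ, hnorm]
    _ = ∫ x, ∑ v ∈ s, |inner ℝ (ι (d v)) x| * rho x :=
        (integral_finsetSum _ fun v _ => abs_int _).symm
    _ = ∫ x, 2 * ((⨆ i, inner ℝ x (ι (a i))) * rho x + (⨆ i, inner ℝ (-x) (ι (a i))) * rho x) := by
        congr 1; ext x
        rw [← Finset.sum_mul, hsup, hsup, hneg]
        simp only [hadj]
        rw [h2]; ring
    _ = _ := by
        rw [integral_const_mul, integral_add hint hint', hflip]; ring


/-- If `|aᵢ - aⱼ| ≥ |bᵢ - bⱼ|` for all `i, j`, then the perimeter of the convex hull of the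
`aᵢ` is at least the perimeter of the convex hull of the `bᵢ`. -/
theorem stmt2 {n : ℕ} (a b : Fin n → EuclideanSpace ℝ (Fin 2))
    (h : ∀ i j, dist (b i) (b j) ≤ dist (a i) (a j)) :
    planePerimeter (convexHull ℝ (Set.range b)) ≤ planePerimeter (convexHull ℝ (Set.range a)) := by
  rcases Nat.eq_zero_or_pos n with rfl | hn
  · have : b = a := Subsingleton.elim _ _
    rw [this]
  have : NeZero n := ⟨hn.ne'⟩
  obtain ⟨κ, hκ0, hκ⟩ := exists_kappa
  set ι₁ : E2 → W4 := fun x => !₂[x 0, x 1, 0, 0] with hι₁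
  set ι₂ : E2 → W4 := fun x => !₂[0, 0, x 0, x 1] with hι₂
  have n1 : ∀ x, ‖ι₁ x‖ = ‖x‖ := fun x => by
    simp [hι₁, EuclideanSpace.norm_eq, Fin.sum_univ_four]
  have n2 : ∀ x, ‖ι₂ x‖ = ‖x‖ := fun x => by
    simp [hι₂, EuclideanSpace.norm_eq, Fin.sum_univ_four]
  have s1 : ∀ x y, ι₁ x - ι₁ y = ι₁ (x - y) := fun x y => by
    ext i; fin_cases i <;> simp [hι₁]
  have s2 : ∀ x y, ι₂ x - ι₂ y = ι₂ (x - y) := fun x y => by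
    ext i; fin_cases i <;> simp [hι₂]
  obtain ⟨P, hP, hP'⟩ := per_integral a ι₁ (fun y => !₂[y 0, y 1])
    (fun x y => by simp [hι₁, PiLp.inner_apply, Fin.sum_univ_four]) n1
    (fun y => by ext i; fin_cases i <;> simp) hκ
  obtain ⟨Q, hQ, hQ'⟩ := per_integral b ι₂ (fun y => !₂[y 2, y 3])
    (fun x y => by simp [hι₂, PiLp.inner_apply, Fin.sum_univ_four]) n2
    (fun y => by ext i; fin_cases i <;> simp) hκ
  have hcmp := sup_compare (fun i => ι₁ (a i)) (fun i => ι₂ (b i))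
    (fun i j => by simp [hι₁, hι₂, PiLp.inner_apply, Fin.sum_univ_four])
    (fun i j => by
      rw [s1, s2, n1, n2, ← dist_eq_norm, ← dist_eq_norm]; exact h i j)
  rw [hP, hQ]
  apply ENNReal.ofReal_le_ofReal
  exact le_of_mul_le_mul_left (by rw [hP', hQ']; linarith) hκ0
end

section
/- Every triangle in ℝ² admits an acute triangulation: it can be subdivided into finitely many triangles, each of whose angles is strictly less than π/2, such that the triangles tile the original triangle and any two of them intersect in a common vertex, a common edge, or the empty set. -/
/-- Dot product of `p - q` and `r - q` in coordinates. -/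
def dotAt (p q r : ℝ × ℝ) : ℝ := (p.1 - q.1) * (r.1 - q.1) + (p.2 - q.2) * (r.2 - q.2)

/-- Twice the signed area. -/
def crs (p q r : ℝ × ℝ) : ℝ := (q.1 - p.1) * (r.2 - p.2) - (q.2 - p.2) * (r.1 - p.1)

/-- The pair condition of the theorem. -/
def FacePair {E : Type*} [AddCommGroup E] [Module ℝ E] (v v' : Fin 3 → E) : Prop :=
  ∃ s s' : Set (Fin 3), v '' s = v' '' s' ∧
    convexHull ℝ (Set.range v) ∩ convexHull ℝ (Set.range v') = convexHull ℝ (v '' s)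

lemma FacePair.symm {E : Type*} [AddCommGroup E] [Module ℝ E] {v v' : Fin 3 → E}
    (h : FacePair v v') : FacePair v' v := by
  obtain ⟨s, s', h1, h2⟩ := h
  exact ⟨s', s, h1.symm, by rw [Set.inter_comm, h2, h1]⟩

lemma FacePair.refl {E : Type*} [AddCommGroup E] [Module ℝ E] (v : Fin 3 → E) :
    FacePair v v := ⟨Set.univ, Set.univ, rfl, by simp⟩

/-- Coordinates of a triangle given by weights. -/
lemma mem_hull_iff (v : Fin 3 → ℝ × ℝ) (P : ℝ × ℝ) :
    P ∈ convexHull ℝ (Set.range v) ↔ ∃ w : Fin 3 → ℝ, (∀ i, 0 ≤ w i) ∧ ∑ i, w i = 1 ∧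
      ∑ i, w i • v i = P := by
  rw [convexHull_range_eq_exists_affineCombination]
  constructor
  · rintro ⟨s, w, h0, h1, rfl⟩
    refine ⟨fun i => if i ∈ s then w i else 0, ?_, ?_, ?_⟩
    · intro i
      by_cases hi : i ∈ s
      · simpa [hi] using h0 i hi
      · simp [hi]
    · simpa using h1
    · rw [Finset.affineCombination_eq_linear_combination _ _ _ h1]
      simp [ite_smul]
  · rintro ⟨w, h0, h1, rfl⟩
    exact ⟨Finset.univ, w, fun i _ => h0 i, h1,
      Finset.affineCombination_eq_linear_combination _ _ _ h1⟩

lemma facePair_of_sep (v v' : Fin 3 → ℝ × ℝ) (p q r : ℝ)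
    (h1 : ∀ i, 0 ≤ p * (v i).1 + q * (v i).2 + r)
    (h2 : ∀ i, p * (v' i).1 + q * (v' i).2 + r ≤ 0)
    (h3 : ∀ i, p * (v i).1 + q * (v i).2 + r = 0 → ∃ j, v' j = v i)
    (h4 : ∀ i, p * (v' i).1 + q * (v' i).2 + r = 0 → ∃ j, v j = v' i) :
    FacePair v v' := by
  refine ⟨{i | p * (v i).1 + q * (v i).2 + r = 0}, {i | p * (v' i).1 + q * (v' i).2 + r = 0},
    ?_, ?_⟩
  · ext P
    constructor
    · rintro ⟨i, hi, rfl⟩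
      obtain ⟨j, hj⟩ := h3 i hi
      exact ⟨j, by simpa [hj] using hi, hj⟩
    · rintro ⟨i, hi, rfl⟩
      obtain ⟨j, hj⟩ := h4 i hi
      exact ⟨j, by simpa [hj] using hi, hj⟩
  · apply Set.Subset.antisymm
    · rintro P ⟨hP, hP'⟩
      rw [mem_hull_iff] at hP hP'
      obtain ⟨w, w0, w1, rfl⟩ := hP
      obtain ⟨w', w0', w1', hw'⟩ := hP'
      have e1 := congrArg Prod.fst hw'
      have e2 := congrArg Prod.snd hw'
      simp only [Fin.sum_univ_three, Prod.fst_add, Prod.snd_add, Prod.smul_fst, Prod.smul_snd,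
        smul_eq_mul] at e1 e2 w1 w1'
      have k : ∀ i, 0 ≤ w i * (p * (v i).1 + q * (v i).2 + r) :=
        fun i => mul_nonneg (w0 i) (h1 i)
      have k' : ∀ i, w' i * (p * (v' i).1 + q * (v' i).2 + r) ≤ 0 :=
        fun i => mul_nonpos_of_nonneg_of_nonpos (w0' i) (h2 i)
      have key : w 0 * (p * (v 0).1 + q * (v 0).2 + r) + w 1 * (p * (v 1).1 + q * (v 1).2 + r)
          + w 2 * (p * (v 2).1 + q * (v 2).2 + r)
          = w' 0 * (p * (v' 0).1 + q * (v' 0).2 + r) + w' 1 * (p * (v' 1).1 + q * (v' 1).2 + r)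
          + w' 2 * (p * (v' 2).1 + q * (v' 2).2 + r) := by
        linear_combination (-p) * e1 - q * e2 + r * w1 - r * w1'
      have z : ∀ i, w i * (p * (v i).1 + q * (v i).2 + r) = 0 := by
        intro i
        have := k 0; have := k 1; have := k 2
        have := k' 0; have := k' 1; have := k' 2
        fin_cases i <;> simp only [Fin.zero_eta, Fin.mk_one, Fin.reduceFinMk] <;> linarith
      have hs : ∑ i, w i • v i =
          ∑ i ∈ Finset.univ.filter (fun i => w i ≠ 0), w i • v i := by
        rw [Finset.sum_filter]
        apply Finset.sum_congr rfl
        intro i _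
        by_cases hi : w i = 0 <;> simp [hi]
      rw [hs]
      apply (convex_convexHull ℝ _).sum_mem
      · intro i _; exact w0 i
      · rw [Finset.sum_filter_ne_zero, Fin.sum_univ_three]; exact w1
      · intro i hi
        apply subset_convexHull
        refine ⟨i, ?_, rfl⟩
        have := z i
        simp only [Finset.mem_filter, Finset.mem_univ, true_and] at hi
        simpa [hi] using this
    · apply Set.subset_inter
      · exact convexHull_mono (Set.image_subset_range _ _)
      · apply convexHull_mono
        rintro _ ⟨i, hi, rfl⟩
        obtain ⟨j, hj⟩ := h3 i hi
        exact ⟨j, hj⟩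

lemma mem_tri (p q r P : ℝ × ℝ) (h0 : 0 < crs p q r) (h1 : 0 ≤ crs q r P)
    (h2 : 0 ≤ crs r p P) (h3 : 0 ≤ crs p q P) :
    P ∈ convexHull ℝ (Set.range ![p, q, r]) := by
  rw [mem_hull_iff]
  refine ⟨![crs q r P / crs p q r, crs r p P / crs p q r, crs p q P / crs p q r], ?_, ?_, ?_⟩
  · intro i
    fin_cases i
    · exact div_nonneg h1 h0.le
    · exact div_nonneg h2 h0.le
    · exact div_nonneg h3 h0.le
  · simp only [Fin.sum_univ_three, Matrix.cons_val]
    rw [← add_div, ← add_div, div_eq_one_iff_eq h0.ne']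
    simp only [crs]; ring
  · simp only [Fin.sum_univ_three, Matrix.cons_val]
    have hne := h0.ne'
    ext
    · simp only [Prod.fst_add, Prod.smul_fst, smul_eq_mul]
      field_simp
      simp only [crs]; ring
    · simp only [Prod.snd_add, Prod.smul_snd, smul_eq_mul]
      field_simp
      simp only [crs]; ring

/-- Orientation-reversed version. -/
lemma mem_tri' (p q r P : ℝ × ℝ) (h0 : crs p q r < 0) (h1 : crs q r P ≤ 0)
    (h2 : crs r p P ≤ 0) (h3 : crs p q P ≤ 0) :
    P ∈ convexHull ℝ (Set.range ![p, q, r]) := by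
  have e : Set.range ![p, q, r] = Set.range ![p, r, q] := by
    simp [Matrix.range_cons, Set.insert_comm, Set.pair_comm]
  rw [e]
  apply mem_tri
  · simp only [crs] at *; linarith
  · simp only [crs] at *; linarith
  · simp only [crs] at *; linarith
  · simp only [crs] at *; linarith

/-- The seven triangles. -/
noncomputable def tris (a b t s : ℝ) : Fin 7 → Fin 3 → ℝ × ℝ :=
  ![![(-a, 0), (-(a * s), 1 - s), (-(a * s / 2), 0)],
    ![(b, 0), (b * s, 1 - s), (b * s / 2, 0)],
    ![(0, t), (-(a * s), 1 - s), (-(a * s / 2), 0)],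
    ![(0, t), (b * s, 1 - s), (b * s / 2, 0)],
    ![(0, t), (-(a * s / 2), 0), (b * s / 2, 0)],
    ![(0, t), (0, 1), (-(a * s), 1 - s)],
    ![(0, t), (0, 1), (b * s, 1 - s)]]

/-- The inequalities the parameters have to satisfy. -/
structure Params (a b t s : ℝ) : Prop where
  ha : 0 < a
  hb : 0 < b
  hs : 0 < s
  hst : s < 1 - t
  ht : 1 / 2 ≤ t
  ht1 : t < 1
  a1 : 1 - t < s * (a ^ 2 + 1)
  b1 : 1 - t < s * (b ^ 2 + 1)
  ab : a * b * s ^ 2 < 4 * t ^ 2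
  a2 : t * (1 - s - t) < a ^ 2 * s ^ 2 / 2
  b2 : t * (1 - s - t) < b ^ 2 * s ^ 2 / 2
  a3 : a ^ 2 * s / 2 < 1 - s
  b3 : b ^ 2 * s / 2 < 1 - s

lemma exists_params (a b : ℝ) (ha : 0 < a) (hb : 0 < b) :
    ∃ t s : ℝ, Params a b t s := by
  obtain ⟨M, hM1, hMa, hMb⟩ : ∃ M : ℝ, 1 ≤ M ∧ a ^ 2 ≤ M ∧ b ^ 2 ≤ M :=
    ⟨max 1 (max (a ^ 2) (b ^ 2)), by simp, by simp, by simp⟩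
  obtain ⟨m, hm0, hm1, hma, hmb⟩ : ∃ m : ℝ, 0 < m ∧ m ≤ 1 ∧ m ≤ a ^ 2 ∧ m ≤ b ^ 2 :=
    ⟨min 1 (min (a ^ 2) (b ^ 2)), by positivity, by simp, by simp, by simp⟩
  obtain ⟨u, hu0, hu⟩ : ∃ u : ℝ, 0 < u ∧ M * u = 1 / 2 := ⟨1 / (2 * M), by positivity, by
    field_simp⟩
  have hu2 : u ≤ 1 / 2 := by nlinarith
  obtain ⟨e, he⟩ : ∃ e, e = m * u / 8 := ⟨_, rfl⟩
  have he0 : 0 < e := by rw [he]; positivity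
  have hem : e ≤ m / 16 := by rw [he]; nlinarith
  obtain ⟨s, hs⟩ : ∃ s, s = u * (1 - e) := ⟨_, rfl⟩
  have hs0 : u / 2 < s := by rw [hs]; nlinarith
  have hsu : s < u := by rw [hs]; nlinarith
  have hsp : 0 < s := by linarith
  have hus : u - s = u * e := by rw [hs]; ring
  have hw : ∀ x : ℝ, m ≤ x → x ≤ M →
      u < s * (x + 1) ∧ (1 - u) * (u - s) < x * s ^ 2 / 2 ∧ x * s / 2 < 1 - s := by
    intro x hx hx'
    refine ⟨?_, ?_, ?_⟩
    · have : s * m ≤ s * x := by gcongr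
      have : u / 2 * m < s * m := by gcongr
      nlinarith
    · have h1 : (1 - u) * (u - s) ≤ u - s := by nlinarith
      have h2 : (u / 2) ^ 2 < s ^ 2 := by gcongr
      have h4 : 0 < m * u ^ 2 := by positivity
      have h5 : m * (u / 2) ^ 2 < m * s ^ 2 := by gcongr
      have h6 : m * s ^ 2 ≤ x * s ^ 2 := by gcongr
      have h7 : u - s = m * u ^ 2 / 8 := by rw [hus, he]; ring
      nlinarith
    · have : x * s ≤ M * u := by gcongr
      linarith
  suffices hh : 1 - (1 - u) < s * (a ^ 2 + 1) ∧ 1 - (1 - u) < s * (b ^ 2 + 1) ∧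
      a * b * s ^ 2 < 4 * (1 - u) ^ 2 ∧ (1 - u) * (1 - s - (1 - u)) < a ^ 2 * s ^ 2 / 2 ∧
      (1 - u) * (1 - s - (1 - u)) < b ^ 2 * s ^ 2 / 2 ∧ a ^ 2 * s / 2 < 1 - s ∧
      b ^ 2 * s / 2 < 1 - s by
    obtain ⟨k1, k2, k3, k4, k5, k6, k7⟩ := hh
    exact ⟨1 - u, s, ha, hb, hsp, by linarith, by linarith, by linarith, k1, k2, k3, k4, k5,
      k6, k7⟩
  obtain ⟨a1, a2, a3⟩ := hw _ hma hMa
  obtain ⟨b1, b2, b3⟩ := hw _ hmb hMb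
  have e1 : 1 - (1 - u) = u := by ring
  have e2 : 1 - s - (1 - u) = u - s := by ring
  rw [e1, e2]
  refine ⟨a1, b1, ?_, a2, b2, a3, b3⟩
  have h1 : a * b ≤ M := by nlinarith [sq_nonneg (a - b)]
  have h2 : a * b * s ^ 2 ≤ M * u ^ 2 := by gcongr
  nlinarith

lemma tris_acute {a b t s : ℝ} (h : Params a b t s) :
    ∀ m, 0 < dotAt (tris a b t s m 1) (tris a b t s m 0) (tris a b t s m 2) ∧
    0 < dotAt (tris a b t s m 0) (tris a b t s m 1) (tris a b t s m 2) ∧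
    0 < dotAt (tris a b t s m 0) (tris a b t s m 2) (tris a b t s m 1) := by
  obtain ⟨ha, hb, hs, hst, ht, ht1, a1, b1, ab, a2, b2, a3, b3⟩ := h
  have hsh : 0 < 1 - 2 * s := by linarith
  have hs1 : 0 < 1 - s := by linarith
  have ht0 : 0 < t := by linarith
  have htt : 0 < 1 - t := by linarith
  have hw : 0 < 1 - s - t := by linarith
  have i1 : 0 < (1 - s) * (1 - s) := by positivity
  have i2 : 0 < (1 - s) * (1 - s / 2) := mul_pos hs1 (by linarith)
  have i3 : 0 < (1 - s - t) * (1 - s) := by positivity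
  have i4 : 0 < (1 - t) * (1 - s - t) := by positivity
  have i5 : 0 < (1 - t) * s := by positivity
  have side : ∀ x : ℝ, 0 < x → 1 - t < s * (x ^ 2 + 1) → t * (1 - s - t) < x ^ 2 * s ^ 2 / 2 →
      x ^ 2 * s / 2 < 1 - s →
      0 < x ^ 2 * ((1 - s) * (1 - s / 2)) ∧ 0 < (1 - s) * ((1 - s) - x ^ 2 * s / 2) ∧
      0 < x ^ 2 * s / 2 * (1 - s / 2) ∧ 0 < x ^ 2 * s ^ 2 / 2 - t * (1 - s - t) ∧
      0 < x ^ 2 * s ^ 2 / 2 + (1 - s - t) * (1 - s) ∧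
      0 < t * (1 - s) - x ^ 2 * s ^ 2 / 4 ∧ 0 < s * (x ^ 2 * s - (1 - s - t)) := by
    intro x hx x1 x2 x3
    refine ⟨by positivity, mul_pos hs1 (by linarith), mul_pos (by positivity) (by linarith),
      by linarith, by positivity, ?_, mul_pos hs (by linarith)⟩
    have h1 : x ^ 2 * s / 2 * (s / 2) < (1 - s) * (s / 2) := by gcongr
    have h2 : (1 - s) * (s / 2) < (1 - s) * t := by gcongr; linarith
    linarith
  obtain ⟨p1, p2, p3, p4, p5, p6, p7⟩ := side a ha a1 a2 a3
  obtain ⟨q1, q2, q3, q4, q5, q6, q7⟩ := side b hb b1 b2 b3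
  have c1 : 0 < a * b * s ^ 2 := by positivity
  have c2 : 0 < a ^ 2 * s ^ 2 := by positivity
  have c3 : 0 < b ^ 2 * s ^ 2 := by positivity
  intro m
  fin_cases m <;> simp only [tris, dotAt, Fin.zero_eta, Fin.mk_one, Fin.reduceFinMk,
    Matrix.cons_val] <;> refine ⟨?_, ?_, ?_⟩ <;> linarith


lemma facePair_of_sep' (v v' : Fin 3 → ℝ × ℝ) (p q r : ℝ)
    (h1 : ∀ i, (p * (v i).1 + q * (v i).2 + r = 0 ∧ ∃ j, v' j = v i) ∨
      0 < p * (v i).1 + q * (v i).2 + r)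
    (h2 : ∀ i, (p * (v' i).1 + q * (v' i).2 + r = 0 ∧ ∃ j, v j = v' i) ∨
      p * (v' i).1 + q * (v' i).2 + r < 0) : FacePair v v' := by
  apply facePair_of_sep v v' p q r
  · intro i; rcases h1 i with h | h
    · exact h.1.ge
    · exact h.le
  · intro i; rcases h2 i with h | h
    · exact h.1.le
    · exact h.le
  · intro i hi; rcases h1 i with h | h
    · exact h.2
    · exact absurd hi h.ne'
  · intro i hi; rcases h2 i with h | h
    · exact h.2
    · exact absurd hi h.ne

lemma tris_lt {a b t s : ℝ} (h : Params a b t s) (m m' : Fin 7) (hm : m' < m) :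
    FacePair (tris a b t s m) (tris a b t s m') := by
  obtain ⟨p, q, r, h12⟩ : ∃ p q r : ℝ,
      (∀ i, (p * (tris a b t s m i).1 + q * (tris a b t s m i).2 + r = 0 ∧
        ∃ j, tris a b t s m' j = tris a b t s m i) ∨
      0 < p * (tris a b t s m i).1 + q * (tris a b t s m i).2 + r) ∧
      (∀ i, (p * (tris a b t s m' i).1 + q * (tris a b t s m' i).2 + r = 0 ∧
        ∃ j, tris a b t s m j = tris a b t s m' i) ∨
      p * (tris a b t s m' i).1 + q * (tris a b t s m' i).2 + r < 0) := by
    obtain ⟨ha, hb, hs, hst, ht, ht1, -, -, -, -, -, -, -⟩ := h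
    have hs1 : 0 < 1 - s := by linarith
    have hs2 : 0 < 1 - s / 2 := by linarith
    have ht0 : 0 < t := by linarith
    have htt : 0 < 1 - t := by linarith
    have hw : 0 < 1 - s - t := by linarith
    have side : ∀ x : ℝ, 0 < x → 0 < x * s ∧ 0 < x * (1 - s) ∧ 0 < x * s * (1 - s) ∧
        0 < x * s * t ∧ 0 < x * s * (1 - t) ∧ 0 < x * s * (1 - s - t) ∧
        0 < x * (1 - s) * (1 - s / 2) ∧ 0 < x * s * s := by
      intro x hx
      refine ⟨?_, ?_, ?_, ?_, ?_, ?_, ?_, ?_⟩ <;> positivity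
    obtain ⟨p1, p2, p3, p4, p5, p6, p7, p8⟩ := side a ha
    obtain ⟨q1, q2, q3, q4, q5, q6, q7, q8⟩ := side b hb
    revert hm
    fin_cases m <;> fin_cases m' <;> intro hm
    all_goals first | exact absurd hm (by decide) | skip
    on_goal 1 => refine ⟨1, 0, 0, ?_⟩
    rotate_left
    on_goal 1 => refine ⟨(1-s), (a*s/2), ((1-s)*(a*s/2)), ?_⟩
    rotate_left
    on_goal 1 => refine ⟨(-1), 0, (b*s/4), ?_⟩
    rotate_left
    on_goal 1 => refine ⟨1, 0, (a*s/4), ?_⟩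
    rotate_left
    on_goal 1 => refine ⟨(-(1-s)), (b*s/2), ((1-s)*(b*s/2)), ?_⟩
    rotate_left
    on_goal 1 => refine ⟨1, 0, 0, ?_⟩
    rotate_left
    on_goal 1 => refine ⟨1, 0, (a*s/2), ?_⟩
    rotate_left
    on_goal 1 => refine ⟨(-1), 0, (b*s/2), ?_⟩
    rotate_left
    on_goal 1 => refine ⟨t, (-(a*s/2)), (t*(a*s/2)), ?_⟩
    rotate_left
    on_goal 1 => refine ⟨(-t), (-(b*s/2)), (t*(b*s/2)), ?_⟩
    rotate_left
    on_goal 1 => refine ⟨(1-s), (a*s), 0, ?_⟩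
    rotate_left
    on_goal 1 => refine ⟨(-1), 0, (b*s/4), ?_⟩
    rotate_left
    on_goal 1 => refine ⟨(1-s-t), (a*s), (-(a*s*t)), ?_⟩
    rotate_left
    on_goal 1 => refine ⟨(-1), (b*s), (-(b*s*t)), ?_⟩
    rotate_left
    on_goal 1 => refine ⟨0, 1, (-t), ?_⟩
    rotate_left
    on_goal 1 => refine ⟨1, 0, (a*s/4), ?_⟩
    rotate_left
    on_goal 1 => refine ⟨(-(1-s)), (b*s), 0, ?_⟩
    rotate_left
    on_goal 1 => refine ⟨1, (a*s), (-(a*s*t)), ?_⟩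
    rotate_left
    on_goal 1 => refine ⟨(-(1-s-t)), (b*s), (-(b*s*t)), ?_⟩
    rotate_left
    on_goal 1 => refine ⟨0, 1, (-t), ?_⟩
    rotate_left
    on_goal 1 => refine ⟨1, 0, 0, ?_⟩
    rotate_left
    all_goals
      constructor <;> intro i <;> fin_cases i <;> simp only [tris, Fin.zero_eta, Fin.mk_one,
      Fin.reduceFinMk, Matrix.cons_val] <;>
      first
      | (right; linarith)
      | (left; refine ⟨by ring, ?_⟩; first | exact ⟨0, rfl⟩ | exact ⟨1, rfl⟩ | exact ⟨2, rfl⟩)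
  exact facePair_of_sep' _ _ p q r h12.1 h12.2

lemma tris_pair {a b t s : ℝ} (h : Params a b t s) (m m' : Fin 7) :
    FacePair (tris a b t s m) (tris a b t s m') := by
  rcases lt_trichotomy m m' with hm | hm | hm
  · exact (tris_lt h _ _ hm).symm
  · rw [hm]; exact FacePair.refl _
  · exact tris_lt h _ _ hm

set_option maxHeartbeats 2000000 in
lemma tris_cover {a b t s : ℝ} (h : Params a b t s) :
    (⋃ m, convexHull ℝ (Set.range (tris a b t s m))) =
      convexHull ℝ {(-a, 0), (b, 0), (0, 1)} := by
  obtain ⟨ha, hb, hs, hst, ht, ht1, -, -, -, -, -, -, -⟩ := h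
  have hs1 : 0 < 1 - s := by linarith
  have ht0 : 0 < t := by linarith
  have htt : 0 < 1 - t := by linarith
  have hw : 0 < 1 - s - t := by linarith
  have e3 : ({(-a, 0), (b, 0), (0, 1)} : Set (ℝ × ℝ)) =
      Set.range ![((-a, 0) : ℝ × ℝ), (b, 0), (0, 1)] := by
    ext P; simp [Matrix.range_cons, or_comm, or_left_comm, or_assoc]
  rw [e3]
  apply Set.Subset.antisymm
  · apply Set.iUnion_subset
    intro m
    apply convexHull_min _ (convex_convexHull ℝ _)
    rintro _ ⟨i, rfl⟩
    have k1 : 0 < a * s := by positivity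
    have k2 : 0 < b * s := by positivity
    have k3 : 0 < a * (1 - s) := by positivity
    have k4 : 0 < b * (1 - s) := by positivity
    apply mem_tri
    · simp only [crs]; linarith
    all_goals
      fin_cases m <;> fin_cases i <;> simp only [tris, crs, Fin.zero_eta, Fin.mk_one,
        Fin.reduceFinMk, Matrix.cons_val] <;> nlinarith
  · rintro ⟨x, y⟩ hP
    have hy : 0 ≤ y ∧ 0 ≤ x + a * (1 - y) ∧ 0 ≤ b * (1 - y) - x := by
      rw [mem_hull_iff] at hP
      obtain ⟨w, w0, w1, w2⟩ := hP
      have e1 := congrArg Prod.fst w2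
      have e2 := congrArg Prod.snd w2
      simp only [Fin.sum_univ_three, Prod.fst_add, Prod.snd_add, Prod.smul_fst, Prod.smul_snd,
        smul_eq_mul, Matrix.cons_val] at e1 e2 w1
      have := w0 0; have := w0 1; have := w0 2
      have e4 : w 2 = y := by linarith
      have e5 : 1 - y = w 0 + w 1 := by linarith
      rw [e5]
      refine ⟨by linarith, ?_, ?_⟩
      · have : 0 ≤ (a + b) * w 1 := by positivity
        linarith
      · have : 0 ≤ (a + b) * w 0 := by positivity
        linarith
    obtain ⟨y0, xa, xb⟩ := hy
    have mk : ∀ m, (x, y) ∈ convexHull ℝ (Set.range (tris a b t s m)) →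
      (x, y) ∈ ⋃ m, convexHull ℝ (Set.range (tris a b t s m)) :=
      fun m hm => Set.mem_iUnion_of_mem m hm
    rcases le_total x 0 with hx | hx
    · have k1 : 0 < a * s := by positivity
      have k2 : 0 < a * (1 - s) := by positivity
      have k3 : 0 < a * s * (1 - s) := by positivity
      have k4 : 0 < a * s * t := by positivity
      have k5 : 0 < a * s * (1 - s - t) := by positivity
      have k6 : 0 < a * s * (1 - t) := by positivity
      have k7 : 0 < a * (1 - s) * (1 - s) := by positivity
      have l1 : 0 ≤ (1 - s) * (a * (1 - y) + x) := mul_nonneg hs1.le (by linarith)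
      have l2 : 0 ≤ s * (a * (1 - y) + x) := mul_nonneg hs.le (by linarith)
      have l3 : 0 ≤ a * s * y := by positivity
      have l4 : 0 ≤ a * (1 - s) * y := by positivity
      have l5 : 0 ≤ (1 - t) * (-x) := mul_nonneg htt.le (by linarith)
      rcases le_total ((1 - s) * (x + a * s / 2) + a * s / 2 * y) 0 with c1 | c1
      · apply mk 0
        apply mem_tri' <;> simp only [crs] <;> linarith
      rcases le_total (t * x + t * (a * s / 2) - a * s / 2 * y) 0 with c2 | c2
      · rcases le_total (a * s * (y - t) + (1 - s - t) * x) 0 with c3 | c3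
        · apply mk 2
          apply mem_tri <;> simp only [crs] <;> linarith
        · apply mk 5
          apply mem_tri <;> simp only [crs] <;> linarith
      · have yt : y ≤ t := by
          have : a * s / 2 * y ≤ a * s / 2 * t := by nlinarith
          exact le_of_mul_le_mul_left this (by positivity)
        have l6 : 0 ≤ b * s * (t - y) := mul_nonneg (by positivity) (by linarith)
        have l7 : 0 ≤ t * (-x) := mul_nonneg ht0.le (by linarith)
        have l8 : 0 < b * s * t := by positivity
        have l9 : 0 ≤ b * s * y := by positivity
        apply mk 4
        apply mem_tri <;> simp only [crs] <;> linarith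
    · have k1 : 0 < b * s := by positivity
      have k2 : 0 < b * (1 - s) := by positivity
      have k3 : 0 < b * s * (1 - s) := by positivity
      have k4 : 0 < b * s * t := by positivity
      have k5 : 0 < b * s * (1 - s - t) := by positivity
      have k6 : 0 < b * s * (1 - t) := by positivity
      have k7 : 0 < b * (1 - s) * (1 - s) := by positivity
      have l1 : 0 ≤ (1 - s) * (b * (1 - y) + (-x)) := mul_nonneg hs1.le (by linarith)
      have l2 : 0 ≤ s * (b * (1 - y) + (-x)) := mul_nonneg hs.le (by linarith)
      have l3 : 0 ≤ b * s * y := by positivity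
      have l4 : 0 ≤ b * (1 - s) * y := by positivity
      have l5 : 0 ≤ (1 - t) * (-(-x)) := mul_nonneg htt.le (by linarith)
      rcases le_total ((1 - s) * ((-x) + b * s / 2) + b * s / 2 * y) 0 with c1 | c1
      · apply mk 1
        apply mem_tri <;> simp only [crs] <;> linarith
      rcases le_total (t * (-x) + t * (b * s / 2) - b * s / 2 * y) 0 with c2 | c2
      · rcases le_total (b * s * (y - t) + (1 - s - t) * (-x)) 0 with c3 | c3
        · apply mk 3
          apply mem_tri' <;> simp only [crs] <;> linarith
        · apply mk 6
          apply mem_tri' <;> simp only [crs] <;> linarith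
      · have yt : y ≤ t := by
          have : b * s / 2 * y ≤ b * s / 2 * t := by nlinarith
          exact le_of_mul_le_mul_left this (by positivity)
        have l6 : 0 ≤ a * s * (t - y) := mul_nonneg (by positivity) (by linarith)
        have l7 : 0 ≤ t * (-(-x)) := mul_nonneg ht0.le (by linarith)
        have l8 : 0 < a * s * t := by positivity
        have l9 : 0 ≤ a * s * y := by positivity
        apply mk 4
        apply mem_tri <;> simp only [crs] <;> linarith

lemma facePair_map {E : Type*} [AddCommGroup E] [Module ℝ E] (f : (ℝ × ℝ) →ᵃ[ℝ] E)
    (hf : Function.Injective f) {v v' : Fin 3 → ℝ × ℝ} (h : FacePair v v') :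
    FacePair (fun i => f (v i)) (fun i => f (v' i)) := by
  obtain ⟨s, s', h1, h2⟩ := h
  have e : ∀ (w : Fin 3 → ℝ × ℝ) (s : Set (Fin 3)), (fun i => f (w i)) '' s = f '' (w '' s) :=
    fun w s => (Set.image_image f w s).symm
  refine ⟨s, s', by rw [e, e, h1], ?_⟩
  rw [← Set.image_univ, ← Set.image_univ, e, e, e, ← AffineMap.image_convexHull,
    ← AffineMap.image_convexHull, ← AffineMap.image_convexHull, ← Set.image_inter hf,
    Set.image_univ, Set.image_univ, h2]

lemma inner_nonpos_of_wbtw {E : Type*} [NormedAddCommGroup E] [InnerProductSpace ℝ E]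
    {p q r : E} (h : Wbtw ℝ p q r) : inner ℝ (p - q) (r - q) ≤ 0 := by
  obtain ⟨k, ⟨k0, k1⟩, rfl⟩ := h
  have e1 : p - AffineMap.lineMap p r k = (-k) • (r - p) := by
    simp only [AffineMap.lineMap_apply, vsub_eq_sub, vadd_eq_add]; module
  have e2 : r - AffineMap.lineMap p r k = (1 - k) • (r - p) := by
    simp only [AffineMap.lineMap_apply, vsub_eq_sub, vadd_eq_add]; module
  rw [e1, e2, real_inner_smul_left, real_inner_smul_right, real_inner_self_eq_norm_sq]
  have : 0 ≤ k * ((1 - k) * ‖r - p‖ ^ 2) :=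
    mul_nonneg k0 (mul_nonneg (by linarith) (by positivity))
  linarith

lemma acute_of_inner {E : Type*} [NormedAddCommGroup E] [InnerProductSpace ℝ E]
    (w : Fin 3 → E) (h0 : 0 < inner ℝ (w 1 - w 0) (w 2 - w 0))
    (h1 : 0 < inner ℝ (w 0 - w 1) (w 2 - w 1)) (h2 : 0 < inner ℝ (w 0 - w 2) (w 1 - w 2)) :
    AffineIndependent ℝ w ∧ ∀ p q r : Fin 3, p ≠ q → q ≠ r → p ≠ r →
        EuclideanGeometry.angle (w p) (w q) (w r) < Real.pi / 2 := by
  constructor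
  · have hw : w = ![w 0, w 1, w 2] := by
      ext i; fin_cases i <;> rfl
    rw [hw, affineIndependent_iff_not_collinear_set]
    intro hc
    rcases hc.wbtw_or_wbtw_or_wbtw with h | h | h
    · exact absurd (inner_nonpos_of_wbtw h) (not_le.2 h1)
    · have := inner_nonpos_of_wbtw h
      rw [real_inner_comm] at this
      linarith
    · have := inner_nonpos_of_wbtw h
      rw [real_inner_comm] at this
      linarith
  · have h0' := h0
    have h1' := h1
    have h2' := h2
    rw [real_inner_comm] at h0' h1' h2'
    intro p q r hpq hqr hpr
    unfold EuclideanGeometry.angle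
    suffices hi : 0 < inner ℝ (w p - w q) (w r - w q) by
      apply Real.arccos_lt_pi_div_two.2
      have hn1 : w p - w q ≠ 0 := fun h0 => by simp [h0] at hi
      have hn2 : w r - w q ≠ 0 := fun h0 => by simp [h0] at hi
      exact div_pos hi (mul_pos (norm_pos_iff.2 hn1) (norm_pos_iff.2 hn2))
    fin_cases p <;> fin_cases q <;> fin_cases r <;>
      first
      | exact absurd rfl hpq
      | exact absurd rfl hqr
      | exact absurd rfl hpr
      | assumption

/-- The conclusion of the theorem, for a given set of vertices. -/
def Good (S : Set (EuclideanSpace ℝ (Fin 2))) : Prop :=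
    ∃ (N : ℕ) (V : Fin (N + 1) → Fin 3 → EuclideanSpace ℝ (Fin 2)),
      (∀ m, AffineIndependent ℝ (V m)) ∧
      (⋃ m, convexHull ℝ (Set.range (V m))) = convexHull ℝ S ∧
      (∀ m m', ∃ s s' : Set (Fin 3), V m '' s = V m' '' s' ∧
        convexHull ℝ (Set.range (V m)) ∩ convexHull ℝ (Set.range (V m')) =
          convexHull ℝ (V m '' s)) ∧
      (∀ m, ∀ p q r : Fin 3, p ≠ q → q ≠ r → p ≠ r →
        EuclideanGeometry.angle (V m p) (V m q) (V m r) < Real.pi / 2)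

lemma good_of_frame (H u v : EuclideanSpace ℝ (Fin 2)) (k a b : ℝ) (hk : 0 < k)
    (huu : inner ℝ u u = k) (hvv : inner ℝ v v = k) (huv : inner ℝ u v = 0)
    (ha : 0 < a) (hb : 0 < b) : Good {H + (-a) • u, H + b • u, H + v} := by
  let f : (ℝ × ℝ) →ᵃ[ℝ] EuclideanSpace ℝ (Fin 2) :=
    ((LinearMap.fst ℝ ℝ ℝ).smulRight u + (LinearMap.snd ℝ ℝ ℝ).smulRight v).toAffineMap +
      AffineMap.const ℝ _ H
  have hf : ∀ p : ℝ × ℝ, f p = p.1 • u + p.2 • v + H := fun p => rfl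
  have hvu : inner ℝ v u = 0 := by rw [real_inner_comm]; exact huv
  have hin : ∀ p q r : ℝ × ℝ, inner ℝ (f p - f q) (f r - f q) = k * dotAt p q r := by
    intro p q r
    have e : ∀ p q : ℝ × ℝ, f p - f q = (p.1 - q.1) • u + (p.2 - q.2) • v := by
      intro p q; rw [hf, hf]; module
    rw [e, e]
    simp only [inner_add_left, inner_add_right, real_inner_smul_left, real_inner_smul_right,
      huu, hvv, huv, hvu, dotAt]
    ring
  have hinj : Function.Injective f := by
    intro p q hpq
    have h1 := hin p q p
    rw [hpq, sub_self, inner_zero_left] at h1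
    have h2 : dotAt p q p = 0 := by
      rcases mul_eq_zero.1 h1.symm with h | h
      · exact absurd h hk.ne'
      · exact h
    simp only [dotAt] at h2
    ext
    · nlinarith [sq_nonneg (p.1 - q.1), sq_nonneg (p.2 - q.2)]
    · nlinarith [sq_nonneg (p.1 - q.1), sq_nonneg (p.2 - q.2)]
  obtain ⟨t, s, hp⟩ := exists_params a b ha hb
  have hac : ∀ m, _ := fun m => acute_of_inner (fun i => f (tris a b t s m i))
    (by rw [hin]; exact mul_pos hk (tris_acute hp m).1)
    (by rw [hin]; exact mul_pos hk (tris_acute hp m).2.1)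
    (by rw [hin]; exact mul_pos hk (tris_acute hp m).2.2)
  refine ⟨6, fun m i => f (tris a b t s m i), fun m => (hac m).1, ?_,
    fun m m' => facePair_map f hinj (tris_pair hp m m'), fun m => (hac m).2⟩
  have e1 : ∀ m, convexHull ℝ (Set.range fun i => f (tris a b t s m i)) =
      f '' convexHull ℝ (Set.range (tris a b t s m)) := by
    intro m
    rw [AffineMap.image_convexHull, ← Set.range_comp]
    rfl
  have e2 : ({H + (-a) • u, H + b • u, H + v} : Set (EuclideanSpace ℝ (Fin 2))) =
      f '' {(-a, 0), (b, 0), (0, 1)} := by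
    simp only [Set.image_insert_eq, Set.image_singleton, hf, zero_smul, one_smul, add_zero,
      zero_add, add_comm H]
  rw [e2, ← AffineMap.image_convexHull, ← tris_cover hp, Set.image_iUnion]
  exact Set.iUnion_congr e1

lemma good_of_acute_base (A B C : EuclideanSpace ℝ (Fin 2)) (h : ¬ Collinear ℝ {A, B, C})
    (hA : 0 < inner ℝ (B - A) (C - A)) (hB : 0 < inner ℝ (A - B) (C - B)) :
    Good {A, B, C} := by
  have hAB : B - A ≠ 0 := by
    intro h0; rw [h0, inner_zero_left] at hA; exact lt_irrefl _ hA
  obtain ⟨n, hn⟩ : ∃ n, n = ‖B - A‖ := ⟨_, rfl⟩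
  have hn0 : 0 < n := by rw [hn]; exact norm_pos_iff.2 hAB
  have hnn : inner ℝ (B - A) (B - A) = n ^ 2 := by rw [real_inner_self_eq_norm_sq, hn]
  obtain ⟨l, hl⟩ : ∃ l, l = inner ℝ (B - A) (C - A) / n ^ 2 := ⟨_, rfl⟩
  have hl0 : 0 < l := by rw [hl]; positivity
  have hln : l * n ^ 2 = inner ℝ (B - A) (C - A) := by rw [hl]; field_simp
  have hl1 : l < 1 := by
    have e : A - B = -(B - A) := by abel
    have e' : C - B = (C - A) - (B - A) := by abel
    rw [e, e', inner_neg_left, inner_sub_right, hnn, ← hln] at hB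
    have : l * n ^ 2 < 1 * n ^ 2 := by linarith
    exact lt_of_mul_lt_mul_right this (by positivity)
  obtain ⟨v, hv⟩ : ∃ v, v = C - A - l • (B - A) := ⟨_, rfl⟩
  have hv0 : v ≠ 0 := by
    intro h0
    apply h
    rw [collinear_iff_of_mem (p₀ := A) (by simp)]
    refine ⟨B - A, ?_⟩
    intro p hp
    simp only [Set.mem_insert_iff, Set.mem_singleton_iff] at hp
    rcases hp with rfl | rfl | rfl
    · exact ⟨0, by simp⟩
    · exact ⟨1, by simp⟩
    · refine ⟨l, ?_⟩
      rw [h0] at hv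
      rw [vadd_eq_add, ← sub_eq_iff_eq_add]
      exact (sub_eq_zero.1 hv.symm)
  have hvp : 0 < ‖v‖ := norm_pos_iff.2 hv0
  have huv : inner ℝ (B - A) v = 0 := by
    rw [hv, inner_sub_right, real_inner_smul_right, hnn, hln, sub_self]
  obtain ⟨c, hc⟩ : ∃ c, c = ‖v‖ / n := ⟨_, rfl⟩
  have hc0 : 0 < c := by rw [hc]; positivity
  have hcn : c * n = ‖v‖ := by rw [hc]; field_simp
  have key := good_of_frame (A + l • (B - A)) (c • (B - A)) v (‖v‖ ^ 2) (l / c) ((1 - l) / c)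
    (by positivity) (by
      rw [real_inner_smul_left, real_inner_smul_right, hnn, ← hcn]; ring)
    (real_inner_self_eq_norm_sq v) (by rw [real_inner_smul_left, huv, mul_zero])
    (by positivity) (div_pos (by linarith) hc0)
  have e1 : A + l • (B - A) + (-(l / c)) • c • (B - A) = A := by
    rw [smul_smul, neg_mul, div_mul_cancel₀ _ hc0.ne']; module
  have e2 : A + l • (B - A) + ((1 - l) / c) • c • (B - A) = B := by
    rw [smul_smul, div_mul_cancel₀ _ hc0.ne']; module
  have e3 : A + l • (B - A) + v = C := by rw [hv]; module
  rwa [e1, e2, e3] at key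

/-- Every triangle in ℝ² admits an acute triangulation: finitely many triangles, pairwise
intersecting in a common face (a common vertex set's hull), whose union is the original
triangle, and all of whose angles are strictly less than `π/2`. -/
theorem stmt13 (A B C : EuclideanSpace ℝ (Fin 2))
    (h : AffineIndependent ℝ ![A, B, C]) :
    ∃ (N : ℕ) (V : Fin (N + 1) → Fin 3 → EuclideanSpace ℝ (Fin 2)),
      (∀ m, AffineIndependent ℝ (V m)) ∧
      (⋃ m, convexHull ℝ (Set.range (V m))) = convexHull ℝ {A, B, C} ∧
      (∀ m m', ∃ s s' : Set (Fin 3), V m '' s = V m' '' s' ∧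
        convexHull ℝ (Set.range (V m)) ∩ convexHull ℝ (Set.range (V m')) =
          convexHull ℝ (V m '' s)) ∧
      (∀ m, ∀ p q r : Fin 3, p ≠ q → q ≠ r → p ≠ r →
        EuclideanGeometry.angle (V m p) (V m q) (V m r) < Real.pi / 2) := by
  have hc : ¬ Collinear ℝ {A, B, C} := affineIndependent_iff_not_collinear_set.1 h
  change Good {A, B, C}
  have nAB : A ≠ B := by rintro rfl; apply hc; simp [collinear_pair]
  have nAC : A ≠ C := by
    rintro rfl; apply hc; rw [Set.pair_comm B A]; simp [collinear_pair]
  have nBC : B ≠ C := by rintro rfl; apply hc; simp [collinear_pair]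
  -- if the angle at one vertex is not acute, the other two are
  have step : ∀ P Q R : EuclideanSpace ℝ (Fin 2), P ≠ Q → inner ℝ (Q - P) (R - P) ≤ 0 →
      0 < inner ℝ (P - Q) (R - Q) := by
    intro P Q R hPQ hle
    have e : P - Q = -(Q - P) := by abel
    have e' : R - Q = (R - P) - (Q - P) := by abel
    have hp : 0 < inner ℝ (Q - P) (Q - P) :=
      real_inner_self_pos.2 (sub_ne_zero.2 hPQ.symm)
    rw [e, e', inner_neg_left, inner_sub_right]
    linarith
  by_cases hA : 0 < inner ℝ (B - A) (C - A)
  · by_cases hB : 0 < inner ℝ (A - B) (C - B)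
    · exact good_of_acute_base A B C hc hA hB
    · have hB' := not_lt.1 hB
      have e : ({A, B, C} : Set (EuclideanSpace ℝ (Fin 2))) = {A, C, B} := by
        rw [Set.pair_comm B C]
      rw [e] at hc ⊢
      refine good_of_acute_base A C B hc (by rw [real_inner_comm]; exact hA) ?_
      have := step B C A nBC (by rw [real_inner_comm]; exact hB')
      rw [real_inner_comm]; exact this
  · have hA' := not_lt.1 hA
    have e : ({A, B, C} : Set (EuclideanSpace ℝ (Fin 2))) = {B, C, A} := by
      rw [Set.insert_comm A B, Set.pair_comm A C]
    rw [e] at hc ⊢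
    refine good_of_acute_base B C A hc ?_ ?_
    · have := step A B C nAB hA'
      rw [real_inner_comm]; exact this
    · have := step A C B nAC (by rw [real_inner_comm]; exact hA')
      rw [real_inner_comm]; exact this
end
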